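/- arXiv:1709.05322 — 3 statements merged into one kernel-verified Lean document; each statement's English description precedes it below -/
import Mathlib

section
/- Let H be an infinite-dimensional Hilbert space and let (a_k)_{k≥1} be a sequence of scalars satisfying sup_n (1/n)∑_{k=1}^n |a_k| < ∞. Then the following are equivalent: (i) for every weakly stable contraction T on H and every x ∈ H, ‖(1/n)∑_{k=1}^n a_k T^k x‖ → 0; (ii) there exist a weakly stable unitary operator U on H and some x ∈ H with x ≠ 0 such that ‖(1/n)∑_{k=1}^n a_k U^k x‖ → 0; (iii) |a_n| = o(n); (iv) (1/n²)∑_{k=1}^n |a_k|² → 0. -/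
open Filter Finset

lemma key_step {𝕜 : Type*} [RCLike 𝕜] {H : Type*} [NormedAddCommGroup H]
    [InnerProductSpace 𝕜 H] [CompleteSpace H] (R : H →L[𝕜] H) (hR : ‖R‖ ≤ 1) (u y : H) :
    ‖(inner 𝕜 (R u) (R y) : 𝕜)‖ ≤ ‖(inner 𝕜 u y : 𝕜)‖ + ‖u‖ * √(‖y‖^2 - ‖R y‖^2) := by
  set z := ContinuousLinearMap.adjoint R (R y) with hz
  have h1 : (inner 𝕜 (R u) (R y) : 𝕜) = inner 𝕜 u z := by
    rw [hz, ContinuousLinearMap.adjoint_inner_right]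
  have hzn : ‖z‖ ≤ ‖R y‖ := by
    have := (ContinuousLinearMap.adjoint R).le_opNorm (R y)
    rw [LinearIsometryEquiv.norm_map] at this
    nlinarith [norm_nonneg (R y)]
  have h2 : ‖y - z‖^2 ≤ ‖y‖^2 - ‖R y‖^2 := by
    have e := norm_sub_sq (𝕜 := 𝕜) y z
    have : (inner 𝕜 y z : 𝕜) = (‖R y‖ : 𝕜)^2 := by
      rw [hz, ContinuousLinearMap.adjoint_inner_right, inner_self_eq_norm_sq_to_K]
    rw [this] at e
    have h3 : RCLike.re ((‖R y‖ : 𝕜)^2) = ‖R y‖^2 := by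
      rw [← RCLike.ofReal_pow, RCLike.ofReal_re]
    rw [h3] at e
    have := pow_le_pow_left₀ (norm_nonneg z) hzn 2
    linarith
  have h4 : ‖y - z‖ ≤ √(‖y‖^2 - ‖R y‖^2) := Real.le_sqrt_of_sq_le h2
  have h5 : (inner 𝕜 u z : 𝕜) = inner 𝕜 u y - inner 𝕜 u (y - z) := by
    rw [inner_sub_right]; ring
  rw [h1, h5]
  refine (norm_sub_le _ _).trans ?_
  have := norm_inner_le_norm (𝕜 := 𝕜) u (y - z)
  have := mul_le_mul_of_nonneg_left h4 (norm_nonneg u)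
  linarith

lemma pow_contr {𝕜 : Type*} [RCLike 𝕜] {H : Type*} [NormedAddCommGroup H]
    [InnerProductSpace 𝕜 H] (T : H →L[𝕜] H) (hT : ‖T‖ ≤ 1) (n : ℕ) :
    ‖T ^ n‖ ≤ 1 := by
  induction n with
  | zero => rw [pow_zero]; exact ContinuousLinearMap.norm_id_le
  | succ n ih =>
    rw [pow_succ]
    refine (norm_mul_le _ _).trans ?_
    nlinarith [norm_nonneg T, norm_nonneg (T^n)]

lemma pow_contr_apply {𝕜 : Type*} [RCLike 𝕜] {H : Type*} [NormedAddCommGroup H]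
    [InnerProductSpace 𝕜 H] (T : H →L[𝕜] H) (hT : ‖T‖ ≤ 1) (n : ℕ) (x : H) :
    ‖(T ^ n) x‖ ≤ ‖x‖ := by
  have := (T^n).le_of_opNorm_le (pow_contr T hT n) x
  simpa using this

lemma key_decay {𝕜 : Type*} [RCLike 𝕜] {H : Type*} [NormedAddCommGroup H]
    [InnerProductSpace 𝕜 H] [CompleteSpace H] (T : H →L[𝕜] H) (hT : ‖T‖ ≤ 1)
    (hw : ∀ x y : H, Tendsto (fun n : ℕ => (inner 𝕜 ((T ^ n) x) y : 𝕜)) atTop (nhds 0))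
    (x : H) (ε : ℝ) (hε : 0 < ε) :
    ∃ J M : ℕ, ∀ j k, J ≤ j → j + M ≤ k → ‖(inner 𝕜 ((T ^ k) x) ((T ^ j) x) : 𝕜)‖ ≤ ε := by
  have hanti : Antitone (fun n : ℕ => ‖(T ^ n) x‖^2) := by
    apply antitone_nat_of_succ_le
    intro n
    have : (T^(n+1)) x = (T^1) ((T^n) x) := by
      rw [add_comm, pow_add]; rfl
    rw [this]
    exact pow_le_pow_left₀ (norm_nonneg _) (pow_contr_apply T hT 1 _) 2
  have hbdd : BddBelow (Set.range (fun n : ℕ => ‖(T ^ n) x‖^2)) :=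
    ⟨0, by rintro _ ⟨n, rfl⟩; positivity⟩
  have hlim := tendsto_atTop_ciInf hanti hbdd
  set L := ⨅ n, ‖(T ^ n) x‖^2
  set δ := ε / (2 * (‖x‖ + 1)) with hδ
  have hδ0 : 0 < δ := by positivity
  obtain ⟨J, hJ⟩ := (hlim.eventually (gt_mem_nhds (show L < L + δ^2 by nlinarith))).exists
  set y := (T^J) x with hy
  have h2 := (hw y y).norm
  rw [norm_zero] at h2
  obtain ⟨M, hM⟩ := eventually_atTop.1 (h2.eventually (gt_mem_nhds (show 0 < ε/2 by linarith)))
  refine ⟨J, M, fun j k hj hk => ?_⟩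
  obtain ⟨r, rfl⟩ := Nat.exists_eq_add_of_le hj
  obtain ⟨m, rfl⟩ := Nat.exists_eq_add_of_le hk
  have e1 : (T^(J+r)) x = (T^r) y := by rw [add_comm, pow_add]; rfl
  have e2 : (T^(J+r+M+m)) x = (T^r) ((T^(M+m)) y) := by
    rw [show J+r+M+m = r + (M+m+J) by ring, pow_add, pow_add T (M+m)]; rfl
  rw [e1, e2]
  refine (key_step (T^r) (pow_contr T hT r) _ _).trans ?_
  have h3 := hM (M+m) (by omega)
  have h4 : √(‖y‖^2 - ‖(T^r) y‖^2) ≤ δ := by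
    apply Real.sqrt_le_iff.2 ⟨hδ0.le, ?_⟩
    have : L ≤ ‖(T^(J+r)) x‖^2 := ciInf_le hbdd (J+r)
    rw [e1] at this
    linarith
  have h5 : ‖(T^(M+m)) y‖ ≤ ‖x‖ :=
    (pow_contr_apply T hT _ _).trans (pow_contr_apply T hT _ _)
  have h6 : ‖(T^(M+m)) y‖ * √(‖y‖^2 - ‖(T^r) y‖^2) ≤ ‖x‖ * δ :=
    mul_le_mul h5 h4 (Real.sqrt_nonneg _) (norm_nonneg _)
  have h7 : (‖x‖+1) * δ = ε/2 := by rw [hδ]; field_simp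
  nlinarith

lemma near_sum (w : ℕ → ℝ) (n M : ℕ) :
    ∑ j ∈ Icc 1 n, ∑ k ∈ Icc 1 n, w j * w k * (if j < k + M ∧ k < j + M then 1 else 0)
      ≤ 2 * M * ∑ j ∈ Icc 1 n, w j ^ 2 := by
  have hc : ∀ j, ∑ k ∈ Icc 1 n, (if j < k + M ∧ k < j + M then (1:ℝ) else 0) ≤ 2 * M := by
    intro j
    rw [Finset.sum_ite, Finset.sum_const_zero, add_zero, Finset.sum_const, nsmul_one]
    have : ((Icc 1 n).filter (fun k => j < k + M ∧ k < j + M)) ⊆ Ico (j + 1 - M) (j + M) := by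
      intro k hk
      simp only [mem_filter, mem_Icc, mem_Ico] at *
      omega
    have := Finset.card_le_card this
    rw [Nat.card_Ico] at this
    have : ((Icc 1 n).filter (fun k => j < k + M ∧ k < j + M)).card ≤ 2 * M := by omega
    exact_mod_cast this
  have h1 : ∀ j k, w j * w k * (if j < k + M ∧ k < j + M then (1:ℝ) else 0) ≤
      w j ^2 / 2 * (if j < k + M ∧ k < j + M then (1:ℝ) else 0) +
      w k ^2 / 2 * (if k < j + M ∧ j < k + M then (1:ℝ) else 0) := by
    intro j k
    by_cases h : j < k + M ∧ k < j + M
    · rw [if_pos h, if_pos h.symm]; nlinarith [sq_nonneg (w j - w k)]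
    · rw [if_neg h, if_neg (fun h' => h h'.symm)]; simp
  refine (Finset.sum_le_sum fun j _ => Finset.sum_le_sum fun k _ => h1 j k).trans ?_
  simp only [Finset.sum_add_distrib]
  rw [Finset.sum_comm (f := fun j k => w k ^2 / 2 * (if k < j + M ∧ j < k + M then (1:ℝ) else 0))]
  rw [← two_mul]
  simp only [← Finset.mul_sum]
  rw [mul_assoc]
  refine mul_le_mul_of_nonneg_left ?_ (by norm_num)
  rw [Finset.mul_sum]
  refine Finset.sum_le_sum fun j _ => ?_
  have := mul_le_mul_of_nonneg_left (hc j) (show 0 ≤ w j ^2 / 2 by positivity)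
  linarith

lemma kernel_sum (w : ℕ → ℝ) (hw : ∀ k, 0 ≤ w k) (K : ℕ → ℕ → ℝ) (B ε : ℝ) (hB : 0 ≤ B)
    (hε : 0 ≤ ε) (hK : ∀ j k, K j k ≤ B)
    (J M : ℕ) (h1 : ∀ j k, J ≤ j → j + M ≤ k → K j k ≤ ε)
    (h2 : ∀ j k, J ≤ j → j + M ≤ k → K k j ≤ ε) (n : ℕ) :
    ∑ j ∈ Icc 1 n, ∑ k ∈ Icc 1 n, w j * w k * K j k ≤
      ε * (∑ k ∈ Icc 1 n, w k)^2 + 2 * B * (∑ k ∈ range J, w k) * (∑ k ∈ Icc 1 n, w k)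
      + B * (2 * M * ∑ j ∈ Icc 1 n, w j ^ 2) := by
  have hp : ∀ j k, w j * w k * K j k ≤ ε * (w j * w k)
      + B * ((w j * if j < J then 1 else 0) * w k)
      + B * ((w k * if k < J then 1 else 0) * w j)
      + B * (w j * w k * (if j < k + M ∧ k < j + M then 1 else 0)) := by
    intro j k
    have p := mul_nonneg (hw j) (hw k)
    have pB := mul_nonneg hB p
    have pe := mul_nonneg hε p
    have q := mul_le_mul_of_nonneg_left (hK j k) p
    by_cases c : K j k ≤ ε
    · have q' := mul_le_mul_of_nonneg_left c p
      have : 0 ≤ B * ((w j * if j < J then 1 else 0) * w k) := by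
        split_ifs <;> nlinarith
      have : 0 ≤ B * ((w k * if k < J then 1 else 0) * w j) := by
        split_ifs <;> nlinarith
      have : 0 ≤ B * (w j * w k * (if j < k + M ∧ k < j + M then 1 else 0)) := by
        split_ifs <;> nlinarith
      linarith
    · have : j < J ∨ k < J ∨ (j < k + M ∧ k < j + M) := by
        by_contra hcon
        push Not at hcon
        obtain ⟨a1, a2, a3⟩ := hcon
        by_cases d : j < k + M
        · exact c (h1 j k a1 (a3 d))
        · exact c (h2 k j a2 (by omega))
      split_ifs <;> first | omega | nlinarith
  refine (Finset.sum_le_sum fun j _ => Finset.sum_le_sum fun k _ => hp j k).trans ?_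
  simp only [Finset.sum_add_distrib, ← Finset.mul_sum]
  have hA : ∑ j ∈ Icc 1 n, (w j * if j < J then 1 else 0) ≤ ∑ k ∈ range J, w k := by
    simp only [mul_ite, mul_one, mul_zero]
    rw [← Finset.sum_filter]
    apply Finset.sum_le_sum_of_subset_of_nonneg
    · intro k hk; simp at *; omega
    · intros; exact hw _
  have hS : 0 ≤ ∑ k ∈ Icc 1 n, w k := Finset.sum_nonneg fun k _ => hw k
  have hN := mul_le_mul_of_nonneg_left (near_sum w n M) hB
  have hAS := mul_le_mul_of_nonneg_left (mul_le_mul_of_nonneg_right hA hS) hB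
  simp only [← Finset.sum_mul, ← Finset.mul_sum] at *
  nlinarith

lemma iv_i {𝕜 : Type*} [RCLike 𝕜] {H : Type*} [NormedAddCommGroup H]
    [InnerProductSpace 𝕜 H] [CompleteSpace H]
    (a : ℕ → 𝕜)
    (ha_bdd : ∃ C : ℝ, ∀ n : ℕ, (n : ℝ)⁻¹ * ∑ k ∈ Icc 1 n, ‖a k‖ ≤ C)
    (h4 : Tendsto (fun n : ℕ => ((n : ℝ) ^ 2)⁻¹ * ∑ k ∈ Icc 1 n, ‖a k‖ ^ 2)
         atTop (nhds 0))
    (T : H →L[𝕜] H) (hT : ‖T‖ ≤ 1)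
    (hw : ∀ x y : H, Tendsto (fun n : ℕ => (inner 𝕜 ((T ^ n) x) y : 𝕜)) atTop (nhds 0))
    (x : H) :
    Tendsto (fun n : ℕ => ‖(n : 𝕜)⁻¹ • ∑ k ∈ Icc 1 n, a k • (T ^ k) x‖)
            atTop (nhds 0) := by
  obtain ⟨C, hC⟩ := ha_bdd
  have hC0 : 0 ≤ C := by simpa using hC 0
  suffices hsq : Tendsto (fun n : ℕ => ‖(n : 𝕜)⁻¹ • ∑ k ∈ Icc 1 n, a k • (T ^ k) x‖^2)
            atTop (nhds 0) by
    have := hsq.sqrt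
    simpa [Real.sqrt_sq] using this
  rw [tendsto_order]
  refine ⟨fun b hb => Eventually.of_forall fun n => lt_of_lt_of_le hb (by positivity), ?_⟩
  intro b hb
  set ε := b / (2 * (C^2 + 1)) with hεd
  have hε : 0 < ε := by positivity
  obtain ⟨J, M, hJM⟩ := key_decay T hT hw x ε hε
  set A := ∑ k ∈ range J, ‖a k‖ with hA
  have hA0 : 0 ≤ A := by positivity
  set B := ‖x‖^2 with hB
  have hlim : Tendsto (fun n : ℕ => ε * C^2 + 2 * B * A * C * (n:ℝ)⁻¹ +
      B * (2 * M) * (((n : ℝ) ^ 2)⁻¹ * ∑ k ∈ Icc 1 n, ‖a k‖ ^ 2)) atTop (nhds (ε * C^2)) := by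
    have t := (tendsto_inv_atTop_nhds_zero_nat (𝕜 := ℝ)).const_mul (2 * B * A * C)
    have := (t.const_add (ε * C^2)).add (h4.const_mul (B * (2*M)))
    simpa using this
  have hlt : ε * C^2 < b := by
    have : ε * (C^2 + 1) = b/2 := by rw [hεd]; field_simp
    nlinarith
  filter_upwards [hlim.eventually (gt_mem_nhds hlt), eventually_gt_atTop 0] with n hn hn0
  refine lt_of_le_of_lt ?_ hn
  have hnR : (0:ℝ) < n := by exact_mod_cast hn0
  set S := ∑ k ∈ Icc 1 n, ‖a k‖ with hS
  have hS0 : 0 ≤ S := by positivity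
  have hSC : (n:ℝ)⁻¹ * S ≤ C := hC n
  have hks := kernel_sum (fun k => ‖a k‖) (fun k => norm_nonneg _)
    (fun j k => ‖(inner 𝕜 ((T ^ j) x) ((T ^ k) x) : 𝕜)‖) B ε (by positivity) hε.le
    (fun j k => by
      refine (norm_inner_le_norm _ _).trans ?_
      rw [hB, sq]
      exact mul_le_mul (pow_contr_apply T hT _ _) (pow_contr_apply T hT _ _)
        (norm_nonneg _) (norm_nonneg _)) J M
    (fun j k h h' => by rw [norm_inner_symm]; exact hJM j k h h')
    (fun j k h h' => hJM j k h h') n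
  have hsum : ‖∑ k ∈ Icc 1 n, a k • (T ^ k) x‖^2 ≤
      ∑ j ∈ Icc 1 n, ∑ k ∈ Icc 1 n, ‖a j‖ * ‖a k‖ * ‖(inner 𝕜 ((T ^ j) x) ((T ^ k) x) : 𝕜)‖ := by
    have : ‖∑ k ∈ Icc 1 n, a k • (T ^ k) x‖^2 = ‖(inner 𝕜 (∑ k ∈ Icc 1 n, a k • (T ^ k) x)
        (∑ k ∈ Icc 1 n, a k • (T ^ k) x) : 𝕜)‖ := by
      rw [inner_self_eq_norm_sq_to_K]; simp
    rw [this, sum_inner]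
    refine (norm_sum_le _ _).trans (Finset.sum_le_sum fun j _ => ?_)
    rw [inner_sum]
    refine (norm_sum_le _ _).trans (Finset.sum_le_sum fun k _ => ?_)
    rw [inner_smul_left, inner_smul_right]
    simp [mul_assoc]
  have hfin := hsum.trans hks
  rw [norm_smul, mul_pow]
  have hnn : ‖(n:𝕜)⁻¹‖ = (n:ℝ)⁻¹ := by simp
  rw [hnn]
  set i := (n:ℝ)⁻¹ with hi
  have hi0 : 0 < i := by positivity
  have hi2 : ((n:ℝ)^2)⁻¹ = i^2 := by rw [hi, inv_pow]
  rw [hi2]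
  refine (mul_le_mul_of_nonneg_left hfin (sq_nonneg i)).trans ?_
  have g1 : (i * S)^2 ≤ C^2 := pow_le_pow_left₀ (by positivity) hSC 2
  have g2 := mul_le_mul_of_nonneg_left g1 hε.le
  have hB0 : 0 ≤ B := by positivity
  have g3 := mul_le_mul_of_nonneg_left hSC (show 0 ≤ 2 * B * A * i by positivity)
  have : i ^ 2 * (ε * S ^ 2 + 2 * B * A * S + B * (2 * M * ∑ j ∈ Icc 1 n, ‖a j‖ ^ 2)) =
    ε * (i*S)^2 + 2 * B * A * i * (i * S) + B * (2 * M) * (i^2 * ∑ j ∈ Icc 1 n, ‖a j‖ ^ 2) := by ring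
  rw [this]
  linarith

lemma ii_iii {𝕜 : Type*} [RCLike 𝕜] {H : Type*} [NormedAddCommGroup H]
    [InnerProductSpace 𝕜 H] [CompleteSpace H]
    (a : ℕ → 𝕜) (U : H →L[𝕜] H) (hU : U ∈ unitary (H →L[𝕜] H)) (x : H) (hx : x ≠ 0)
    (h : Tendsto (fun n : ℕ => ‖(n : 𝕜)⁻¹ • ∑ k ∈ Icc 1 n, a k • (U ^ k) x‖)
            atTop (nhds 0)) :
    Tendsto (fun n : ℕ => ‖a n‖ / (n : ℝ)) atTop (nhds 0) := by
  have hnorm : ∀ n, ‖(U^n) x‖ = ‖x‖ := fun n =>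
    ContinuousLinearMap.norm_map_of_mem_unitary (pow_mem hU n) x
  have hx' : 0 < ‖x‖ := norm_pos_iff.2 hx
  rw [← tendsto_add_atTop_iff_nat 1]
  have h' := (tendsto_add_atTop_iff_nat 1).2 h
  have hs := (h'.add h).div_const ‖x‖
  simp only [add_zero, zero_div] at hs
  refine squeeze_zero (fun n => by positivity) (fun n => ?_) hs
  rw [le_div_iff₀ hx']
  simp only [norm_smul]
  have e : ‖a (n+1)‖ * ‖x‖ ≤ ‖∑ k ∈ Icc 1 (n+1), a k • (U ^ k) x‖ +
      ‖∑ k ∈ Icc 1 n, a k • (U ^ k) x‖ := by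
    rw [← hnorm (n+1), ← norm_smul]
    have : a (n+1) • (U^(n+1)) x = ∑ k ∈ Icc 1 (n+1), a k • (U ^ k) x -
      ∑ k ∈ Icc 1 n, a k • (U ^ k) x := by
      rw [Finset.sum_Icc_succ_top (by omega)]; abel
    rw [this]; exact norm_sub_le _ _
  rcases Nat.eq_zero_or_pos n with rfl | hn
  · simp at e ⊢
    simpa using e
  · have hn' : (0:ℝ) < n := by exact_mod_cast hn
    have i1 : ‖((n+1 : ℕ):𝕜)⁻¹‖ = ((n+1:ℕ):ℝ)⁻¹ := by
      rw [norm_inv, RCLike.norm_natCast]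
    have i2 : ‖(n:𝕜)⁻¹‖ = (n:ℝ)⁻¹ := by simp
    rw [i1, i2]
    have i3 : ((n+1:ℕ):ℝ)⁻¹ ≤ (n:ℝ)⁻¹ := by
      apply inv_anti₀ hn'; push_cast; linarith
    have := mul_le_mul_of_nonneg_left e (show 0 ≤ ((n+1:ℕ):ℝ)⁻¹ by positivity)
    have := mul_le_mul_of_nonneg_right i3 (norm_nonneg (∑ k ∈ Icc 1 n, a k • (U ^ k) x))
    rw [div_eq_inv_mul, mul_assoc]
    linarith

lemma iv_iii {𝕜 : Type*} [RCLike 𝕜] (a : ℕ → 𝕜)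
    (h4 : Tendsto (fun n : ℕ => ((n : ℝ) ^ 2)⁻¹ * ∑ k ∈ Icc 1 n, ‖a k‖ ^ 2)
         atTop (nhds 0)) :
    Tendsto (fun n : ℕ => ‖a n‖ / (n : ℝ)) atTop (nhds 0) := by
  have := h4.sqrt
  rw [Real.sqrt_zero] at this
  refine squeeze_zero' (Eventually.of_forall fun n => by positivity) ?_ this
  filter_upwards [eventually_gt_atTop 0] with n hn
  apply Real.le_sqrt_of_sq_le
  rw [div_pow, div_eq_inv_mul]
  refine mul_le_mul_of_nonneg_left ?_ (by positivity)
  exact Finset.single_le_sum (f := fun k => ‖a k‖^2) (fun k _ => by positivity)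
    (mem_Icc.2 ⟨hn, le_rfl⟩)

lemma iii_iv {𝕜 : Type*} [RCLike 𝕜] (a : ℕ → 𝕜)
    (ha_bdd : ∃ C : ℝ, ∀ n : ℕ, (n : ℝ)⁻¹ * ∑ k ∈ Icc 1 n, ‖a k‖ ≤ C)
    (h3 : Tendsto (fun n : ℕ => ‖a n‖ / (n : ℝ)) atTop (nhds 0)) :
    Tendsto (fun n : ℕ => ((n : ℝ) ^ 2)⁻¹ * ∑ k ∈ Icc 1 n, ‖a k‖ ^ 2)
         atTop (nhds 0) := by
  obtain ⟨C, hC⟩ := ha_bdd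
  have hC0 : 0 ≤ C := by simpa using hC 0
  rw [tendsto_order]
  refine ⟨fun b hb => Eventually.of_forall fun n => lt_of_lt_of_le hb (by positivity), ?_⟩
  intro b hb
  set ε := b / (2 * (C + 1)) with hεd
  have hε : 0 < ε := by positivity
  obtain ⟨N, hN⟩ := eventually_atTop.1 (h3.eventually (gt_mem_nhds hε))
  set A := ∑ k ∈ range (N+1), ‖a k‖^2 with hA
  have hlim : Tendsto (fun n : ℕ => ε * C + A * ((n:ℝ)⁻¹ * (n:ℝ)⁻¹)) atTop (nhds (ε * C)) := by
    have t := (tendsto_inv_atTop_nhds_zero_nat (𝕜 := ℝ))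
    have := ((t.mul t).const_mul A).const_add (ε * C)
    simpa using this
  have hlt : ε * C < b := by
    have : ε * (C + 1) = b/2 := by rw [hεd]; field_simp
    nlinarith
  filter_upwards [hlim.eventually (gt_mem_nhds hlt), eventually_gt_atTop 0] with n hn hn0
  refine lt_of_le_of_lt ?_ hn
  have hnR : (0:ℝ) < n := by exact_mod_cast hn0
  have hp : ∀ k ∈ Icc 1 n, ‖a k‖^2 ≤ ε * n * ‖a k‖ + (if k < N + 1 then ‖a k‖^2 else 0) := by
    intro k hk
    rw [mem_Icc] at hk
    split_ifs with h
    · have : 0 ≤ ε * n * ‖a k‖ := by positivity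
      linarith
    · have := hN k (by omega)
      have hk0 : (0:ℝ) < k := by exact_mod_cast hk.1
      rw [div_lt_iff₀ hk0] at this
      have hkn : (k:ℝ) ≤ n := by exact_mod_cast hk.2
      have : ‖a k‖ ≤ ε * n := by nlinarith
      nlinarith [norm_nonneg (a k)]
  have hq := Finset.sum_le_sum hp
  rw [Finset.sum_add_distrib, ← Finset.mul_sum, ← Finset.sum_filter] at hq
  have hA' : ∑ k ∈ (Icc 1 n).filter (fun k => k < N + 1), ‖a k‖^2 ≤ A := by
    apply Finset.sum_le_sum_of_subset_of_nonneg
    · intro k hk; simp at *; omega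
    · intros; positivity
  set S := ∑ k ∈ Icc 1 n, ‖a k‖
  have hSC : (n:ℝ)⁻¹ * S ≤ C := hC n
  have hfin := mul_le_mul_of_nonneg_left (hq.trans (add_le_add_right hA' _))
    (show 0 ≤ ((n:ℝ)^2)⁻¹ by positivity)
  refine hfin.trans ?_
  have : ((n:ℝ)^2)⁻¹ * (ε * n * S + A) = ε * ((n:ℝ)⁻¹ * S) + A * ((n:ℝ)⁻¹ * (n:ℝ)⁻¹) := by
    field_simp
  rw [this]
  have := mul_le_mul_of_nonneg_left hSC hε.le
  linarith

lemma exists_shift (ι : Type*) [Infinite ι] :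
    ∃ e : Equiv.Perm ι, ∀ i, Function.Injective (fun n : ℕ => (e ^ n) i) := by
  have hc : Cardinal.mk ι = Cardinal.mk (ι × ℤ) := by
    simp [Cardinal.mul_eq_left (Cardinal.aleph0_le_mk ι) (Cardinal.aleph0_le_mk ι)]
  obtain ⟨f⟩ := Cardinal.eq.1 hc
  let s : Equiv.Perm (ι × ℤ) := Equiv.prodCongr (Equiv.refl ι) (Equiv.addRight (1:ℤ))
  have hs : ∀ (n : ℕ) p, (s ^ n) p = (p.1, p.2 + n) := by
    intro n
    induction n with
    | zero => intro p; simp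
    | succ n ih =>
      intro p
      rw [pow_succ', Equiv.Perm.mul_apply, ih]
      simp [s, add_assoc]
  refine ⟨(f.trans s).trans f.symm, fun i => ?_⟩
  have hp : ∀ n : ℕ, (((f.trans s).trans f.symm : Equiv.Perm ι) ^ n) i = f.symm ((s^n) (f i)) := by
    intro n
    induction n with
    | zero => simp
    | succ n ih =>
      rw [pow_succ', Equiv.Perm.mul_apply, ih, pow_succ' s, Equiv.Perm.mul_apply]
      simp
  intro m n h
  simp only [hp, hs] at h
  simpa using h

lemma exists_unitary {𝕜 : Type*} [RCLike 𝕜] {H : Type*} [NormedAddCommGroup H]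
    [InnerProductSpace 𝕜 H] [CompleteSpace H] (hH : ¬ FiniteDimensional 𝕜 H) :
    ∃ U : H →L[𝕜] H, U ∈ unitary (H →L[𝕜] H) ∧
        (∀ x y : H, Tendsto (fun n : ℕ => (inner 𝕜 ((U ^ n) x) y : 𝕜)) atTop (nhds 0)) := by
  obtain ⟨w, b, -⟩ := exists_hilbertBasis 𝕜 H
  have hinf : Infinite w := by
    by_contra hfin
    rw [not_infinite_iff_finite] at hfin
    have := Fintype.ofFinite w
    exact hH (b.toOrthonormalBasis.toBasis.finiteDimensional_of_finite)
  obtain ⟨e, he⟩ := exists_shift w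
  let b' : HilbertBasis w 𝕜 H := HilbertBasis.mk (v := fun i => b (e i))
    (b.orthonormal.comp e e.injective) (by
      have : Set.range (fun i => b (e i)) = Set.range b := e.surjective.range_comp b
      rw [this, b.dense_span])
  have hb' : ∀ i, b' i = b (e i) := fun i => by simp [b']
  let V : H ≃ₗᵢ[𝕜] H := b.repr.trans b'.repr.symm
  have hV : ∀ i, V (b i) = b (e i) := fun i => by
    classical
    rw [← hb']
    simp [V, HilbertBasis.repr_self, HilbertBasis.repr_symm_single]
  let U : unitary (H →L[𝕜] H) := Unitary.linearIsometryEquiv.symm V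
  have hUV : ∀ x, (U : H →L[𝕜] H) x = V x := fun x => by simp [U]
  refine ⟨U, U.2, ?_⟩
  have hpow : ∀ (n : ℕ) i, ((U : H →L[𝕜] H)^n) (b i) = b ((e^n) i) := by
    intro n i
    induction n with
    | zero => simp
    | succ n ih =>
      rw [pow_succ', ContinuousLinearMap.mul_apply, ih, hUV, hV, pow_succ', Equiv.Perm.mul_apply]
  have hnorm : ∀ (n : ℕ) x, ‖((U : H →L[𝕜] H)^n) x‖ = ‖x‖ := fun n x =>
    ContinuousLinearMap.norm_map_of_mem_unitary (pow_mem U.2 n) x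
  intro x y
  have hx : x ∈ (Submodule.span 𝕜 (Set.range b)).topologicalClosure := by
    rw [b.dense_span]; trivial
  have hspan : ∀ z ∈ Submodule.span 𝕜 (Set.range b),
      Tendsto (fun n : ℕ => (inner 𝕜 (((U : H →L[𝕜] H) ^ n) z) y : 𝕜)) atTop (nhds 0) := by
    intro z hz
    induction hz using Submodule.span_induction with
    | mem z hz =>
      obtain ⟨i, rfl⟩ := hz
      simp only [hpow]
      have hs : Summable (fun i => ‖(inner 𝕜 (b i) y : 𝕜)‖^2) :=
        b.orthonormal.inner_products_summable y
      have ht := (hs.tendsto_cofinite_zero).comp (he i).tendsto_cofinite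
      rw [Nat.cofinite_eq_atTop] at ht
      have := ht.sqrt
      rw [tendsto_zero_iff_norm_tendsto_zero]
      simpa [Function.comp_def, Real.sqrt_sq] using this
    | zero => simp
    | add u v _ _ hu hv => simpa [inner_add_left] using hu.add hv
    | smul c u _ hu => simpa [inner_smul_left] using hu.const_mul (starRingEnd 𝕜 c)
  rw [Metric.tendsto_atTop]
  intro ε hε
  have hx2 : x ∈ closure (Submodule.span 𝕜 (Set.range b) : Set H) := hx
  obtain ⟨z, hz, hxz⟩ := Metric.mem_closure_iff.1 hx2 (ε / (2 * (‖y‖ + 1))) (by positivity)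
  obtain ⟨N, hN⟩ := Metric.tendsto_atTop.1 (hspan z hz) (ε/2) (by linarith)
  refine ⟨N, fun n hn => ?_⟩
  have h1 := hN n hn
  rw [dist_zero_right] at h1 ⊢
  have h2 : (inner 𝕜 (((U : H →L[𝕜] H) ^ n) x) y : 𝕜) =
      inner 𝕜 (((U : H →L[𝕜] H) ^ n) z) y + inner 𝕜 (((U : H →L[𝕜] H) ^ n) (x - z)) y := by
    rw [← inner_add_left, ← map_add]; congr 2; abel
  rw [h2]
  have h3 := norm_inner_le_norm (𝕜 := 𝕜) (((U : H →L[𝕜] H) ^ n) (x - z)) y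
  rw [hnorm, ← dist_eq_norm] at h3
  rw [lt_div_iff₀ (by positivity)] at hxz
  have := norm_add_le (inner 𝕜 (((U : H →L[𝕜] H) ^ n) z) y)
    (inner 𝕜 (((U : H →L[𝕜] H) ^ n) (x - z)) y)
  nlinarith [dist_nonneg (x := x) (y := z)]


/-- Let `H` be an infinite-dimensional Hilbert space and `(a_k)` scalars with
`sup_n (1/n) ∑_{k=1}^n |a_k| < ∞`. TFAE:
(i) for every weakly stable contraction `T` on `H` and every `x`,
`‖(1/n) ∑_{k=1}^n a_k T^k x‖ → 0`;
(ii) there are a weakly stable unitary `U` on `H` and `x ≠ 0` with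
`‖(1/n) ∑_{k=1}^n a_k U^k x‖ → 0`;
(iii) `|a_n| = o(n)`;
(iv) `(1/n²) ∑_{k=1}^n |a_k|² → 0`. -/
theorem stmt8 {𝕜 : Type*} [RCLike 𝕜] {H : Type*} [NormedAddCommGroup H]
    [InnerProductSpace 𝕜 H] [CompleteSpace H] (hH : ¬ FiniteDimensional 𝕜 H)
    (a : ℕ → 𝕜)
    (ha_bdd : ∃ C : ℝ, ∀ n : ℕ, (n : ℝ)⁻¹ * ∑ k ∈ Icc 1 n, ‖a k‖ ≤ C) :
    List.TFAE
      [∀ T : H →L[𝕜] H, ‖T‖ ≤ 1 →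
        (∀ x y : H, Tendsto (fun n : ℕ => (inner 𝕜 ((T ^ n) x) y : 𝕜)) atTop (nhds 0)) →
        ∀ x : H,
          Tendsto (fun n : ℕ => ‖(n : 𝕜)⁻¹ • ∑ k ∈ Icc 1 n, a k • (T ^ k) x‖)
            atTop (nhds 0),
       ∃ U : H →L[𝕜] H, U ∈ unitary (H →L[𝕜] H) ∧
        (∀ x y : H, Tendsto (fun n : ℕ => (inner 𝕜 ((U ^ n) x) y : 𝕜)) atTop (nhds 0)) ∧
        ∃ x : H, x ≠ 0 ∧
          Tendsto (fun n : ℕ => ‖(n : 𝕜)⁻¹ • ∑ k ∈ Icc 1 n, a k • (U ^ k) x‖)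
            atTop (nhds 0),
       Tendsto (fun n : ℕ => ‖a n‖ / (n : ℝ)) atTop (nhds 0),
       Tendsto (fun n : ℕ => ((n : ℝ) ^ 2)⁻¹ * ∑ k ∈ Icc 1 n, ‖a k‖ ^ 2)
         atTop (nhds 0)] := by
  tfae_have 1 → 2 := by
    intro h
    obtain ⟨U, hU, hw⟩ := exists_unitary hH
    have : ∃ x : H, x ≠ 0 := by
      by_contra hc
      push Not at hc
      have : Subsingleton H := ⟨fun p q => by rw [hc p, hc q]⟩
      exact hH inferInstance
    obtain ⟨x, hx⟩ := this
    refine ⟨U, hU, hw, x, hx, h U ?_ hw x⟩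
    refine ContinuousLinearMap.opNorm_le_bound _ zero_le_one fun z => ?_
    rw [ContinuousLinearMap.norm_map_of_mem_unitary hU, one_mul]
  tfae_have 2 → 3 := by
    rintro ⟨U, hU, -, x, hx, h⟩
    exact ii_iii a U hU x hx h
  tfae_have 3 → 4 := iii_iv a ha_bdd
  tfae_have 4 → 1 := fun h4 T hT hw x => iv_i a ha_bdd h4 T hT hw x
  tfae_finish
end

section
/- Let (a_n)_{n≥1} be a sequence of complex numbers. If for every complex Hilbert space H, every unitary operator T on H, and every flight vector x of T the sequence (1/n)∑_{k=1}^n a_k T^k x converges weakly, then a_n = o(n), i.e. |a_n|/n → 0. -/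
open Filter Finset

universe u

namespace FlightAux

/-- Fourier coefficients of the partial Riesz products. -/
noncomputable def phi (m : ℕ → ℕ) : ℕ → ℤ → ℝ
  | 0 => fun n => if n = 0 then 1 else 0
  | J + 1 => fun n => phi m J n + (phi m J (n + m J) + phi m J (n - m J)) / 2

theorem phi_neg (m : ℕ → ℕ) (J : ℕ) : ∀ n, phi m J (-n) = phi m J n := by
  induction J with
  | zero => intro n; simp [phi]
  | succ J ih =>
    intro n
    have h1 : -n + (m J : ℤ) = -(n - m J) := by ring
    have h2 : -n - (m J : ℤ) = -(n + m J) := by ring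
    simp only [phi]
    rw [h1, h2, ih, ih, ih]
    ring

theorem phi_gram (m : ℕ → ℕ) (J : ℕ) :
    ∃ w : ℤ → lp (fun _ : ℤ => ℂ) 2, ∀ i j, inner ℂ (w i) (w j) = (phi m J (i - j) : ℂ) := by
  induction J with
  | zero =>
    refine ⟨fun i => lp.single 2 i (1 : ℂ), fun i j => ?_⟩
    rw [lp.inner_single_left, lp.single_apply, Pi.single_apply]
    by_cases hij : i = j
    · subst hij; simp [phi]
    · simp [phi, hij, sub_eq_zero]
  | succ J ih =>
    obtain ⟨w, hw⟩ := ih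
    refine ⟨fun i => ((Real.sqrt 2)⁻¹ : ℂ) • (w i + w (i + m J)), fun i j => ?_⟩
    have h2 : ((Real.sqrt 2 : ℝ) : ℂ)⁻¹ * ((Real.sqrt 2 : ℝ) : ℂ)⁻¹ = 1 / 2 := by
      rw [← mul_inv, ← Complex.ofReal_mul, Real.mul_self_sqrt (by norm_num)]
      norm_num
    simp only [inner_smul_left, inner_smul_right, inner_add_left, inner_add_right, hw, phi,
      map_inv₀, Complex.conj_ofReal]
    have e1 : i + (m J : ℤ) - j = i - j + m J := by ring
    have e2 : i - (j + (m J : ℤ)) = i - j - m J := by ring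
    have e3 : i + (m J : ℤ) - (j + m J) = i - j := by ring
    rw [e1, e2, e3, ← mul_add, ← mul_assoc, h2]
    push_cast
    ring

theorem m_gt {m : ℕ → ℕ} (h0 : 0 < m 0) (hm : ∀ j, 10 * m j < m (j + 1))
    (j : ℕ) : j < m j := by
  induction j with
  | zero => exact h0
  | succ j ih => have := hm j; omega

theorem m_mono {m : ℕ → ℕ} (_h0 : 0 < m 0) (hm : ∀ j, 10 * m j < m (j + 1))
    : StrictMono m :=
  strictMono_nat_of_lt_succ fun j => by have := hm j; omega

theorem phi_supp {m : ℕ → ℕ} (h0 : 0 < m 0) (hm : ∀ j, 10 * m j < m (j + 1))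
    (J : ℕ) : ∀ n : ℤ, (m J : ℤ) < 9 * |n| → phi m J n = 0 := by
  induction J with
  | zero =>
    intro n hn
    have : n ≠ 0 := by rintro rfl; simp at hn; omega
    simp [phi, this]
  | succ J ih =>
    intro n hn
    have := hm J
    simp only [phi]
    rw [ih n, ih (n + m J), ih (n - m J)]
    · simp
    all_goals
      rcases abs_cases n with h | h
      all_goals
        (rcases abs_cases (n - (m J : ℤ)) with h' | h' <;>
            rcases abs_cases (n + (m J : ℤ)) with h'' | h'' <;> omega)

theorem phi_stable {m : ℕ → ℕ} (h0 : 0 < m 0) (hm : ∀ j, 10 * m j < m (j + 1))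
    (n : ℤ) (J : ℕ) (hJ : 9 * |n| < 8 * m J) :
    ∀ J', J ≤ J' → phi m J' n = phi m J n := by
  intro J' hJ'
  induction J', hJ' using Nat.le_induction with
  | base => rfl
  | succ K hK ih =>
    have hmono := (m_mono h0 hm).monotone hK
    rw [← ih]
    simp only [phi]
    rw [phi_supp h0 hm K (n + m K), phi_supp h0 hm K (n - m K)]
    · simp
    all_goals
      rcases abs_cases n with h | h
      all_goals
        (rcases abs_cases (n - (m K : ℤ)) with h' | h' <;>
            rcases abs_cases (n + (m K : ℤ)) with h'' | h'' <;> omega)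

theorem phi_zero {m : ℕ → ℕ} (h0 : 0 < m 0) (hm : ∀ j, 10 * m j < m (j + 1))
    (J : ℕ) : phi m J 0 = 1 := by
  rw [phi_stable h0 hm 0 0 (by simpa using h0) J (Nat.zero_le _)]
  simp [phi]

theorem phi_at {m : ℕ → ℕ} (h0 : 0 < m 0) (hm : ∀ j, 10 * m j < m (j + 1))
    (k : ℕ) : phi m (k + 1) (m k) = 1 / 2 := by
  have hk := m_gt h0 hm k
  simp only [phi]
  rw [phi_supp h0 hm k (m k), phi_supp h0 hm k (m k + m k), sub_self, phi_zero h0 hm]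
  · norm_num
  all_goals rw [abs_of_nonneg (by positivity)]; omega

theorem phi_far {m : ℕ → ℕ} (h0 : 0 < m 0) (hm : ∀ j, 10 * m j < m (j + 1))
    (k : ℕ) (p : ℤ) (hp : 9 * |p| ≤ m k) : phi m (k + 1) (2 * m k - p) = 0 := by
  have hk := m_gt h0 hm k
  have h1 := abs_le.1 (le_refl |p|)
  simp only [phi]
  rw [phi_supp h0 hm k, phi_supp h0 hm k, phi_supp h0 hm k]
  · norm_num
  all_goals rw [abs_of_nonneg (by omega)]; omega

/-- There is a limit function. -/
theorem exists_limit {m : ℕ → ℕ} (h0 : 0 < m 0) (hm : ∀ j, 10 * m j < m (j + 1))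
    : ∃ ψ : ℤ → ℝ,
    (∀ n : ℤ, ∀ J, 9 * |n| < 8 * m J → phi m J n = ψ n) ∧
    (∀ n, ∀ᶠ J in atTop, phi m J n = ψ n) ∧
    (∀ k, ψ (m k) = 1 / 2) ∧
    ∀ p : ℤ, ∀ᶠ k in atTop, ψ (2 * m k - p) = 0 := by
  have key : ∀ n : ℤ, 9 * |n| < 8 * m (2 * n.natAbs) := by
    intro n
    have := m_gt h0 hm (2 * n.natAbs)
    rw [Int.abs_eq_natAbs]
    omega
  have hA : ∀ n : ℤ, ∀ J, 9 * |n| < 8 * m J → phi m J n = phi m (2 * n.natAbs) n := by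
    intro n J hJ
    rcases le_total J (2 * n.natAbs) with h | h
    · exact (phi_stable h0 hm n J hJ _ h).symm
    · exact phi_stable h0 hm n _ (key n) _ h
  refine ⟨fun n => phi m (2 * n.natAbs) n, hA, ?_, ?_, ?_⟩
  · intro n
    filter_upwards [eventually_ge_atTop (2 * n.natAbs)] with J hJ
    exact phi_stable h0 hm n _ (key n) _ hJ
  · intro k
    have := hm k
    show phi m _ (m k : ℤ) = _
    rw [← hA (m k) (k + 1), phi_at h0 hm]
    rw [abs_of_nonneg (by positivity)]; omega
  · intro p
    filter_upwards [eventually_ge_atTop (9 * p.natAbs)] with k hk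
    have h1 := hm k
    have h2 := m_gt h0 hm k
    have hp : 9 * |p| ≤ m k := by rw [Int.abs_eq_natAbs]; omega
    have h3 := abs_le.1 (le_refl |p|)
    show phi m _ (2 * m k - p : ℤ) = _
    rw [← hA _ (k + 1), phi_far h0 hm k p hp]
    rw [abs_of_nonneg (by omega)]; omega

/-- The kernel attached to a function on the integers. -/
noncomputable def ker (ψ : ℤ → ℝ) : Matrix (ULift.{u} ℤ) (ULift.{u} ℤ) (ℂ →L[ℂ] ℂ) :=
  fun i j => (ψ (i.down - j.down) : ℂ) • ContinuousLinearMap.id ℂ ℂ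

theorem ker_posSemidef (m : ℕ → ℕ) (ψ : ℤ → ℝ) (h : ∀ n, ∀ᶠ J in atTop, phi m J n = ψ n) :
    (ker.{u} ψ).PosSemidef := by
  have heven : ∀ n, ψ (-n) = ψ n := by
    intro n
    obtain ⟨J, h1, h2⟩ := ((h n).and (h (-n))).exists
    rw [← h1, ← h2, phi_neg]
  have htf := (RKHS.posSemidef_tfae (K := ker.{u} ψ)).out 0 2
  refine htf.2 ⟨?_, fun f => ?_⟩
  · ext i j
    simp [ker, Matrix.conjTranspose_apply, ← heven (i.down - j.down),
      ContinuousLinearMap.star_eq_adjoint, ← ContinuousLinearMap.one_def, -FunLike.coe_one,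
      star_one]
  · have hev : ∀ᶠ J in atTop, ∀ x ∈ f.support, ∀ x' ∈ f.support,
        phi m J (x.down - x'.down) = ψ (x.down - x'.down) := by
      rw [Filter.eventually_all_finset]; intro x _
      rw [Filter.eventually_all_finset]; intro x' _
      exact h _
    obtain ⟨J, hJ⟩ := hev.exists
    obtain ⟨w, hw⟩ := phi_gram m J
    have hE : (f.sum fun x c => f.sum fun x' c' => inner ℂ (ker.{u} ψ x' x c) c')
        = inner ℂ (f.sum fun x c => c • w x.down) (f.sum fun x c => c • w x.down) := by
      simp only [Finsupp.sum, sum_inner, inner_sum]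
      rw [Finset.sum_comm]
      refine Finset.sum_congr rfl fun x hx => Finset.sum_congr rfl fun x' hx' => ?_
      rw [inner_smul_left, inner_smul_right, hw, hJ x' hx' x hx, ← heven, neg_sub]
      simp [ker]
      ring
    rw [hE]
    exact inner_self_nonneg

theorem gram_shift {H : Type u} [NormedAddCommGroup H] [InnerProductSpace ℂ H] (v : ℤ → H)
    (ψ : ℤ → ℝ) (hin : ∀ i j, inner ℂ (v i) (v j) = (ψ (j - i) : ℂ)) (c : ℤ →₀ ℂ) :
    (inner ℂ (c.sum fun i z => z • v (i + 1)) (c.sum fun i z => z • v (i + 1)) : ℂ)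
      = inner ℂ (c.sum fun i z => z • v i) (c.sum fun i z => z • v i) := by
  simp only [Finsupp.sum, sum_inner, inner_sum,
    inner_smul_left, inner_smul_right, hin, add_sub_add_right_eq_sub]

theorem exists_gns (ψ : ℤ → ℝ) (hψ : (ker.{u} ψ).PosSemidef) :
    ∃ (H : Type u) (_ : NormedAddCommGroup H) (_ : InnerProductSpace ℂ H)
      (_ : CompleteSpace H) (U : H ≃ₗᵢ[ℂ] H) (v : ℤ → H),
      (∀ i, U (v i) = v (i + 1)) ∧ (∀ i j, inner ℂ (v i) (v j) = (ψ (j - i) : ℂ)) ∧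
      Dense (Submodule.span ℂ (Set.range v) : Set H) := by
  have : Fact (ker.{u} ψ).PosSemidef := ⟨hψ⟩
  let H := RKHS.OfKernel (ker.{u} ψ)
  let v : ℤ → H := fun i => RKHS.kerFun H (ULift.up i) (1 : ℂ)
  have hin : ∀ i j, inner ℂ (v i) (v j) = (ψ (j - i) : ℂ) := by
    intro i j
    show inner ℂ (RKHS.kerFun H (ULift.up i) (1 : ℂ)) (RKHS.kerFun H (ULift.up j) (1 : ℂ)) = _
    rw [← RKHS.kernel_inner]
    rw [RKHS.OfKernel.kernel_ofKernel]
    simp [ker]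
  have hd : Dense (Submodule.span ℂ (Set.range v) : Set H) := by
    rw [Submodule.dense_iff_topologicalClosure_eq_top, eq_top_iff, ← RKHS.kerFun_dense H]
    refine Submodule.topologicalClosure_mono (Submodule.span_le.2 ?_)
    rintro _ ⟨x, c, rfl⟩
    have : RKHS.kerFun H x c = c • v x.down := by
      rw [← map_smul]; simp
    rw [this]
    exact Submodule.smul_mem _ _ (Submodule.subset_span ⟨_, rfl⟩)
  let e : (ℤ →₀ ℂ) →ₗ[ℂ] H := Finsupp.linearCombination ℂ v
  have hde : DenseRange e := by
    have : Set.range e = (Submodule.span ℂ (Set.range v) : Set H) := by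
      rw [← Finsupp.range_linearCombination]; rfl
    rw [DenseRange, this]
    exact hd
  let f : (ℤ →₀ ℂ) ≃ₗ[ℂ] (ℤ →₀ ℂ) := Finsupp.domLCongr (Equiv.addRight (1 : ℤ))
  have hef : ∀ c, e (f c) = c.sum fun i z => z • v (i + 1) := by
    intro c
    simp only [e, f, Finsupp.linearCombination_apply, Finsupp.domLCongr_apply,
      Finsupp.domCongr_apply]
    rw [Finsupp.equivMapDomain_eq_mapDomain, Finsupp.sum_mapDomain_index] <;> simp [add_smul]
  have hnorm : ∀ c, ‖e (f c)‖ = ‖e c‖ := by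
    intro c
    have : (inner ℂ (e (f c)) (e (f c)) : ℂ) = inner ℂ (e c) (e c) := by
      rw [hef]
      simp only [e, Finsupp.linearCombination_apply]
      exact gram_shift v ψ hin c
    rw [@norm_eq_sqrt_re_inner ℂ, @norm_eq_sqrt_re_inner ℂ, this]
  refine ⟨H, inferInstance, inferInstance, inferInstance,
    f.extendOfIsometry e e hde hde hnorm, v, ?_, hin, hd⟩
  intro i
  have h1 : v i = e (Finsupp.single i 1) := by simp [e]
  rw [h1, LinearEquiv.extendOfIsometry_eq, hef]
  simp

theorem weak_of_dense {H : Type u} [NormedAddCommGroup H] [InnerProductSpace ℂ H] (s : ℕ → H)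
    (C : ℝ) (hC : ∀ k, ‖s k‖ ≤ C) (v : ℤ → H)
    (hd : Dense (Submodule.span ℂ (Set.range v) : Set H))
    (hv : ∀ j, Tendsto (fun k => (inner ℂ (s k) (v j) : ℂ)) atTop (nhds 0)) (y : H) :
    Tendsto (fun k => (inner ℂ (s k) y : ℂ)) atTop (nhds 0) := by
  have hspan : ∀ y ∈ Submodule.span ℂ (Set.range v),
      Tendsto (fun k => (inner ℂ (s k) y : ℂ)) atTop (nhds 0) := by
    intro y hy
    induction hy using Submodule.span_induction with
    | mem x hx => obtain ⟨j, rfl⟩ := hx; exact hv j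
    | zero => simp
    | add x y _ _ hx hy => simpa [inner_add_right] using hx.add hy
    | smul c x _ hx => simpa [inner_smul_right] using hx.const_mul c
  have hC0 : 0 ≤ C := (norm_nonneg _).trans (hC 0)
  rw [Metric.tendsto_atTop]
  intro ε hε
  obtain ⟨y', hy', hyy⟩ := hd.exists_dist_lt y (show 0 < ε / 2 / (C + 1) by positivity)
  obtain ⟨N, hN⟩ := Metric.tendsto_atTop.1 (hspan y' hy') (ε / 2) (by positivity)
  refine ⟨N, fun k hk => ?_⟩
  have h1 := hN k hk
  rw [dist_zero_right] at h1 ⊢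
  have h2 : (inner ℂ (s k) y : ℂ) = inner ℂ (s k) (y - y') + inner ℂ (s k) y' := by
    rw [← inner_add_right]; simp
  rw [dist_eq_norm, lt_div_iff₀ (by positivity)] at hyy
  have h3 : ‖(inner ℂ (s k) (y - y') : ℂ)‖ ≤ C * ‖y - y'‖ :=
    (norm_inner_le_norm _ _).trans (mul_le_mul_of_nonneg_right (hC k) (norm_nonneg _))
  have h4 := norm_add_le (inner ℂ (s k) (y - y') : ℂ) (inner ℂ (s k) y')
  rw [h2]
  nlinarith [norm_nonneg (y - y')]

end FlightAux

open FlightAux in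
/-- Let `(a_n)` be a complex sequence. Suppose that for every complex Hilbert
space `H`, every unitary operator `T` on `H` and every flight vector `x` of `T` (i.e.
`T^{n_j} x → 0` weakly along some strictly increasing `(n_j)`), the averages
`(1/n) ∑_{k=1}^n a_k T^k x` converge weakly. Then `|a_n|/n → 0`. -/
theorem stmt9 (a : ℕ → ℂ)
    (h : ∀ (H : Type u) (_ : NormedAddCommGroup H) (_ : InnerProductSpace ℂ H)
      (_ : CompleteSpace H) (T : H →L[ℂ] H), T ∈ unitary (H →L[ℂ] H) →
      ∀ x : H,
        (∃ n : ℕ → ℕ, StrictMono n ∧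
          ∀ y : H, Tendsto (fun j : ℕ => (inner ℂ ((T ^ n j) x) y : ℂ)) atTop (nhds 0)) →
        ∃ z : H, ∀ y : H,
          Tendsto (fun n : ℕ =>
              (inner ℂ ((n : ℂ)⁻¹ • ∑ k ∈ Icc 1 n, a k • (T ^ k) x) y : ℂ))
            atTop (nhds (inner ℂ z y))) :
    Tendsto (fun n : ℕ => ‖a n‖ / (n : ℝ)) atTop (nhds 0) := by
  by_contra hcon
  have hfreq : ∃ ε : ℝ, 0 < ε ∧ ∀ N : ℕ, ∃ n, N ≤ n ∧ ε ≤ ‖a n‖ / (n : ℝ) := by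
    rw [Metric.tendsto_atTop] at hcon
    push Not at hcon
    obtain ⟨ε, hε, hcon⟩ := hcon
    refine ⟨ε, hε, fun N => ?_⟩
    obtain ⟨n, hn, h1⟩ := hcon N
    refine ⟨n, hn, ?_⟩
    rwa [Real.dist_0_eq_abs, abs_of_nonneg (by positivity)] at h1
  obtain ⟨ε, hε, hfreq⟩ := hfreq
  choose g hg1 hg2 using hfreq
  obtain ⟨m, h0, hm, hma⟩ : ∃ m : ℕ → ℕ, 0 < m 0 ∧ (∀ j, 10 * m j < m (j + 1)) ∧
      ∀ j, ε ≤ ‖a (m j)‖ / (m j : ℝ) := by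
    refine ⟨fun j => Nat.rec (motive := fun _ => ℕ) (g 1) (fun _ r => g (10 * r + 1)) j,
      hg1 1, fun j => hg1 _, fun j => ?_⟩
    cases j with
    | zero => exact hg2 1
    | succ j => exact hg2 _
  obtain ⟨ψ, -, hψ2, hψ3, hψ4⟩ := exists_limit h0 hm
  obtain ⟨H, i1, i2, i3, U, v, hU, hin, hd⟩ := exists_gns.{u} ψ (ker_posSemidef m ψ hψ2)
  let T : unitary (H →L[ℂ] H) := Unitary.linearIsometryEquiv.symm U
  have hT : ∀ y, (T : H →L[ℂ] H) y = U y := fun y => rfl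
  have hTp : ∀ n : ℕ, ((T : H →L[ℂ] H) ^ n) (v 0) = v n := by
    intro n
    induction n with
    | zero => simp
    | succ n ih =>
      rw [pow_succ', ContinuousLinearMap.mul_apply, ih, hT, hU]
      push_cast; rfl
  have heven : ∀ n, ψ (-n) = ψ n := by
    intro n
    obtain ⟨J, h1, h2⟩ := ((hψ2 n).and (hψ2 (-n))).exists
    rw [← h1, ← h2, phi_neg]
  have hflight : ∃ n : ℕ → ℕ, StrictMono n ∧ ∀ y : H,
      Tendsto (fun j : ℕ => (inner ℂ (((T : H →L[ℂ] H) ^ n j) (v 0)) y : ℂ)) atTop (nhds 0) := by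
    refine ⟨fun k => 2 * m k, fun i j hij => ?_, fun y => ?_⟩
    · have := m_mono h0 hm hij
      show 2 * m i < 2 * m j
      omega
    · simp only [hTp]
      refine weak_of_dense (fun k => v ((2 * m k : ℕ) : ℤ)) (Real.sqrt (ψ 0)) (fun k => ?_) v hd
        (fun j => ?_) y
      · rw [@norm_eq_sqrt_re_inner ℂ, hin]; simp
      · refine tendsto_const_nhds.congr' ?_
        filter_upwards [hψ4 j] with k hk
        rw [hin, ← heven]
        have : -(j - ((2 * m k : ℕ) : ℤ)) = 2 * m k - j := by push_cast; ring
        rw [this, hk]; simp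
  obtain ⟨z, hz⟩ := h H i1 i2 i3 T T.2 (v 0) hflight
  have hz0 := hz (v 0)
  set F : ℕ → ℂ := fun n =>
    (inner ℂ ((n : ℂ)⁻¹ • ∑ k ∈ Icc 1 n, a k • ((T : H →L[ℂ] H) ^ k) (v 0)) (v 0) : ℂ) with hF
  have hstep : ∀ n : ℕ, F (n + 1) - ((n : ℂ) / (n + 1 : ℂ)) * F n
      = (starRingEnd ℂ (a (n + 1))) / (n + 1 : ℂ) * ψ (n + 1) := by
    intro n
    have hn1 : (n + 1 : ℂ) ≠ 0 := by exact_mod_cast Nat.succ_ne_zero n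
    simp only [hF]
    rw [Finset.sum_Icc_succ_top (by omega)]
    simp only [inner_smul_left, inner_add_left, hTp, hin]
    rcases Nat.eq_zero_or_pos n with rfl | hn
    · simp [heven]
    · have hn0 : (n : ℂ) ≠ 0 := by exact_mod_cast hn.ne'
      have e1 : ψ (0 - ((n + 1 : ℕ) : ℤ)) = ψ (n + 1) := by
        rw [← heven]; congr 1
      rw [e1]
      simp only [map_inv₀, Complex.conj_natCast]
      push_cast
      field_simp
      ring
  have hlim : Tendsto (fun n : ℕ => F (n + 1) - ((n : ℂ) / (n + 1 : ℂ)) * F n) atTop (nhds 0) := by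
    have h1 := hz0.comp (tendsto_add_atTop_nat 1)
    have h2 := (tendsto_natCast_div_add_atTop (𝕜 := ℂ) (1 : ℂ)).mul hz0
    have h3 := h1.sub h2
    simpa using h3
  simp only [hstep] at hlim
  have hpred : Tendsto (fun k => m k - 1) atTop atTop :=
    (tendsto_sub_atTop_nat 1).comp (m_mono h0 hm).tendsto_atTop
  have hlim2 := (hlim.comp hpred).norm
  rw [norm_zero] at hlim2
  have hle : ∀ k, ε / 2 ≤ ‖((fun n : ℕ => (starRingEnd ℂ (a (n + 1))) / (n + 1 : ℂ) * ψ (n + 1)) ∘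
      (fun k => m k - 1)) k‖ := by
    intro k
    have hk := m_gt h0 hm k
    obtain ⟨r, hr⟩ : ∃ r, m k = r + 1 := ⟨m k - 1, by omega⟩
    have h1 := hma k
    have h2 := hψ3 k
    simp only [Function.comp, hr, Nat.add_sub_cancel] at h1 h2 ⊢
    push_cast at h1 h2
    rw [h2, norm_mul, norm_div, RCLike.norm_conj]
    have : ‖(r + 1 : ℂ)‖ = (r : ℝ) + 1 := by
      have := Complex.norm_natCast (r + 1)
      push_cast at this; exact this
    rw [this]
    norm_num
    linarith
  have := ge_of_tendsto' hlim2 hle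
  linarith
end

section
/- Let T be a power-bounded linear operator on a Banach space X and let x ∈ X. Then the following are equivalent: (i) (1/n)∑_{k=1}^n T^{p_k} x converges in norm; (ii) (1/N)∑_{k=1}^N Λ'(k) T^k x converges in norm; (iii) (1/N)∑_{k=1}^N Λ(k) T^k x converges in norm. Moreover, if one of these limits exists, all three limits are equal. -/
open Filter Finset

/-- The modified von Mangoldt function `Λ'(n) = log n` if `n` is prime, `0` otherwise. -/
noncomputable def LambdaPrime (n : ℕ) : ℝ := if n.Prime then Real.log n else 0

section Tauber
open MeasureTheory Topology

/-- Fejer kernel. -/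
noncomputable def fejK (u : ℝ) : ℝ := if u = 0 then 1 else 2 * (1 - Real.cos u) / u ^ 2

lemma fejK_nonneg (u : ℝ) : 0 ≤ fejK u := by
  unfold fejK
  split_ifs
  · norm_num
  · have := Real.cos_le_one u
    have : 0 ≤ 1 - Real.cos u := by linarith
    positivity

lemma fejK_le (u : ℝ) : fejK u ≤ 8 * (1 + u ^ 2)⁻¹ := by
  unfold fejK
  split_ifs with h
  · subst h; norm_num
  · have h2 : 0 < u ^ 2 := by positivity
    rw [← div_eq_mul_inv, div_le_div_iff₀ h2 (by positivity)]
    have h1 := Real.one_sub_sq_div_two_le_cos (x := u)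
    have h3 := Real.neg_one_le_cos u
    nlinarith

lemma fejK_meas : Measurable fejK := by
  unfold fejK
  refine Measurable.ite (measurableSet_singleton 0) measurable_const ?_
  fun_prop

lemma fejK_int : Integrable fejK := by
  refine (integrable_inv_one_add_sq.const_mul 8).mono' fejK_meas.aestronglyMeasurable ?_
  filter_upwards with u
  rw [Real.norm_of_nonneg (fejK_nonneg u)]
  exact fejK_le u

lemma fejK_integral_pos : 0 < ∫ u, fejK u := by
  rw [integral_pos_iff_support_of_nonneg fejK_nonneg fejK_int]
  refine lt_of_lt_of_le ?_ (measure_mono (s := Set.Ioo (0 : ℝ) 1) ?_)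
  · simp
  · intro u hu
    have hu0 : u ≠ 0 := hu.1.ne'
    simp only [Function.mem_support, fejK, hu0, if_false]
    have : Real.cos u < 1 := by
      have := Real.cos_lt_cos_of_nonneg_of_le_pi (x := 0) (y := u) le_rfl
        (by linarith [Real.pi_gt_three, hu.2]) hu.1
      simpa using this
    have : 0 < 1 - Real.cos u := by linarith
    have := hu.1
    positivity

lemma fej_half (c : ℂ) (hc : c ≠ 0) :
    ∫ y in (0 : ℝ)..1, ((1 : ℂ) - y) * Complex.exp (c * y) =
      Complex.exp c / c ^ 2 - (1 / c + 1 / c ^ 2) := by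
  have hd : ∀ y : ℝ, HasDerivAt (fun y : ℝ => ((1 - (y : ℂ)) / c + 1 / c ^ 2) * Complex.exp (c * y))
      (((1 : ℂ) - y) * Complex.exp (c * y)) y := by
    intro y
    have h1 : HasDerivAt (fun z : ℂ => ((1 - z) / c + 1 / c ^ 2) * Complex.exp (c * z))
      ((-1 / c) * Complex.exp (c * y) + ((1 - (y : ℂ)) / c + 1 / c ^ 2) *
        (Complex.exp (c * y) * (c * 1))) y := by
      refine HasDerivAt.mul ?_ ?_
      · exact (((hasDerivAt_id _).const_sub 1).div_const c).add_const _
      · exact ((hasDerivAt_id _).const_mul c).cexp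
    convert! h1.comp_ofReal using 1
    field_simp
    ring
  rw [intervalIntegral.integral_eq_sub_of_hasDerivAt (fun y _ => hd y)]
  · simp
    ring
  · apply Continuous.intervalIntegrable
    fun_prop

lemma fej_fourier (u : ℝ) :
    ∫ y in (-1 : ℝ)..1, ((1 - |y| : ℝ) : ℂ) * Complex.exp (Complex.I * u * y) = fejK u := by
  have hci : ∀ a b : ℝ, IntervalIntegrable
      (fun y : ℝ => ((1 - |y| : ℝ) : ℂ) * Complex.exp (Complex.I * u * y)) volume a b := by
    intro a b
    apply Continuous.intervalIntegrable
    fun_prop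
  rw [← intervalIntegral.integral_add_adjacent_intervals (hci (-1) 0) (hci 0 1)]
  have e1 : ∫ y in (0 : ℝ)..1, ((1 - |y| : ℝ) : ℂ) * Complex.exp (Complex.I * u * y) =
      ∫ y in (0 : ℝ)..1, ((1 : ℂ) - y) * Complex.exp (Complex.I * u * y) := by
    refine intervalIntegral.integral_congr fun y hy => ?_
    rw [Set.uIcc_of_le zero_le_one] at hy
    simp [abs_of_nonneg hy.1]
  have e2 : ∫ y in (-1 : ℝ)..0, ((1 - |y| : ℝ) : ℂ) * Complex.exp (Complex.I * u * y) =
      ∫ y in (0 : ℝ)..1, ((1 : ℂ) - y) * Complex.exp (-(Complex.I * u) * y) := by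
    have := intervalIntegral.integral_comp_neg (a := 0) (b := 1)
      (fun y : ℝ => ((1 - |y| : ℝ) : ℂ) * Complex.exp (Complex.I * u * y))
    rw [neg_zero] at this
    rw [← this]
    refine intervalIntegral.integral_congr fun y hy => ?_
    rw [Set.uIcc_of_le zero_le_one] at hy
    simp [abs_of_nonneg hy.1]
  rw [e1, e2]
  rcases eq_or_ne u 0 with rfl | hu
  · simp only [Complex.ofReal_zero, mul_zero, neg_zero, zero_mul, Complex.exp_zero, mul_one, fejK,
      if_true]
    have : ∫ y in (0 : ℝ)..1, ((1 : ℂ) - y) = ((∫ y in (0 : ℝ)..1, (1 - y) : ℝ) : ℂ) := by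
      rw [← intervalIntegral.integral_ofReal]
      simp
    rw [this, intervalIntegral.integral_sub (by simp) (by simp), integral_id]
    simp
    norm_num
  · have hu' : (u : ℂ) ≠ 0 := by exact_mod_cast hu
    have hc : Complex.I * u ≠ 0 := mul_ne_zero Complex.I_ne_zero hu'
    rw [fej_half _ hc, fej_half _ (neg_ne_zero.2 hc)]
    simp only [fejK, hu, if_false]
    push_cast
    rw [Complex.cos]
    have : (Complex.I * u)^2 = - (u:ℂ)^2 := by rw [mul_pow]; simp
    rw [neg_sq, this, mul_comm Complex.I]
    have h3 : -(u * Complex.I) = -u * Complex.I := by ring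
    rw [h3]
    field_simp
    ring

lemma taub_integrable (F : ℝ → ℝ) (hFm : Measurable F) (C : ℝ) (hF : ∀ t, |F t| ≤ C)
    (hF0 : ∀ t ≤ 0, F t = 0) (δ : ℝ) (hδ : 0 < δ) :
    Integrable (fun t => F t * Real.exp (-δ * t)) := by
  rw [← integrableOn_iff_integrable_of_support_subset (s := Set.Ioi 0)]
  · have h1 := (exp_neg_integrableOn_Ioi 0 hδ).const_mul C
    refine h1.mono' (by fun_prop) ?_
    filter_upwards with t
    rw [norm_mul, Real.norm_eq_abs, Real.norm_of_nonneg (Real.exp_pos _).le]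
    gcongr
    exact hF t
  · intro t ht
    by_contra h
    simp only [Set.mem_Ioi, not_lt] at h
    simp [hF0 t h] at ht

lemma taub_fubini (F : ℝ → ℝ) (hFm : Measurable F) (C : ℝ) (hF : ∀ t, |F t| ≤ C)
    (hF0 : ∀ t ≤ 0, F t = 0) (G : ℂ → ℂ)
    (hFG : ∀ z : ℂ, 0 < z.re → ∫ t : ℝ, (F t : ℂ) * Complex.exp (-z * t) = G z)
    (l x δ : ℝ) (hδ : 0 < δ) :
    ∫ y in (-1 : ℝ)..1, ((1 - |y| : ℝ) : ℂ) * (Complex.exp (Complex.I * (l * x : ℝ) * y) *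
      G (δ + Complex.I * l * y)) =
    ((∫ t, F t * Real.exp (-δ * t) * fejK (l * (x - t)) : ℝ) : ℂ) := by
  have hint := taub_integrable F hFm C hF hF0 δ hδ
  set f : ℝ → ℝ → ℂ := fun y t => ((1 - |y| : ℝ) : ℂ) * Complex.exp (Complex.I * (l * x : ℝ) * y) *
    ((F t : ℂ) * Complex.exp (-(δ + Complex.I * l * y) * t)) with hf
  rw [intervalIntegral.integral_of_le (by norm_num)]
  have e1 : ∀ y : ℝ, ((1 - |y| : ℝ) : ℂ) * (Complex.exp (Complex.I * (l * x : ℝ) * y) *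
      G (δ + Complex.I * l * y)) = ∫ t, f y t := by
    intro y
    rw [← hFG _ (by simpa using hδ), ← mul_assoc, ← integral_const_mul]
  simp_rw [e1]
  rw [integral_integral_swap]
  · rw [← integral_complex_ofReal]
    refine integral_congr_ae ?_
    filter_upwards with t
    simp only [Complex.ofReal_mul]
    rw [← fej_fourier, intervalIntegral.integral_of_le (by norm_num), ← integral_const_mul]
    refine integral_congr_ae ?_
    filter_upwards with y
    simp only [hf]
    push_cast
    have : Complex.exp (-(δ + Complex.I * l * y) * t) = Complex.exp (-δ * t) *
      Complex.exp (-(Complex.I * l * y * t)) := by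
      rw [← Complex.exp_add]; congr 1; ring
    have h2 : Complex.exp (Complex.I * (l * (x - t)) * y) = Complex.exp (Complex.I * (l * x) * y) *
      Complex.exp (-(Complex.I * l * y * t)) := by
      rw [← Complex.exp_add]; congr 1; ring
    rw [this, h2]
    ring
  · have h1 : Integrable (fun y : ℝ => (1 - |y|)) (volume.restrict (Set.Ioc (-1 : ℝ) 1)) := by
      have : Continuous (fun y : ℝ => (1 - |y|)) := by fun_prop
      exact (this.integrableOn_Icc (a := -1) (b := 1)).mono_set Set.Ioc_subset_Icc_self
    refine (h1.mul_prod hint).norm.mono' ?_ ?_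
    · apply Measurable.aestronglyMeasurable
      simp only [hf, Function.uncurry_def]
      fun_prop
    · filter_upwards with p
      simp only [hf, Function.uncurry_def, norm_mul, Complex.norm_exp, Complex.norm_real]
      simp

lemma taub_fej (F : ℝ → ℝ) (hFm : Measurable F) (C : ℝ) (hF : ∀ t, |F t| ≤ C)
    (hF0 : ∀ t ≤ 0, F t = 0) (G : ℂ → ℂ) (hG : ContinuousOn G {z | 0 ≤ z.re})
    (hFG : ∀ z : ℂ, 0 < z.re → ∫ t : ℝ, (F t : ℂ) * Complex.exp (-z * t) = G z)
    (l x : ℝ) (hl : 0 < l) :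
    ∫ y in (-1 : ℝ)..1, ((1 - |y| : ℝ) : ℂ) * (Complex.exp (Complex.I * (l * x : ℝ) * y) *
      G (Complex.I * l * y)) =
    ((∫ t, F t * fejK (l * (x - t)) : ℝ) : ℂ) := by
  have hC : 0 ≤ C := (abs_nonneg _).trans (hF 0)
  have hev : ∀ᶠ δ : ℝ in 𝓝[>] 0, δ ∈ Set.Ioc (0 : ℝ) 1 := Ioc_mem_nhdsGT one_pos
  have hR : Tendsto (fun δ : ℝ => ((∫ t, F t * Real.exp (-δ * t) * fejK (l * (x - t)) : ℝ) : ℂ))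
      (𝓝[>] 0) (𝓝 ((∫ t, F t * fejK (l * (x - t)) : ℝ) : ℂ)) := by
    refine (Complex.continuous_ofReal.tendsto _).comp ?_
    refine tendsto_integral_filter_of_dominated_convergence (fun t => C * fejK (l * (x - t)))
      ?_ ?_ ?_ ?_
    · filter_upwards with δ
      apply Measurable.aestronglyMeasurable
      have := fejK_meas
      fun_prop
    · filter_upwards [hev] with δ hδ
      filter_upwards with t
      rw [norm_mul, norm_mul, Real.norm_of_nonneg (fejK_nonneg _),
        Real.norm_of_nonneg (Real.exp_pos _).le]
      refine mul_le_mul_of_nonneg_right ?_ (fejK_nonneg _)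
      rcases le_or_gt t 0 with ht | ht
      · simp [hF0 t ht, hC]
      · have : Real.exp (-δ * t) ≤ 1 := by
          rw [Real.exp_le_one_iff]; nlinarith [hδ.1]
        calc _ ≤ C * 1 := by gcongr; exact hF t
          _ = C := mul_one _
    · have h2 : Integrable fun t => fejK (l * (x - t)) :=
        (fejK_int.comp_mul_left' hl.ne').comp_sub_left x
      exact h2.const_mul C
    · filter_upwards with t
      have : Continuous fun δ : ℝ => F t * Real.exp (-δ * t) * fejK (l * (x - t)) := by fun_prop
      have := (this.tendsto 0).mono_left (nhdsWithin_le_nhds (s := Set.Ioi 0))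
      simpa using this
  have hmem : ∀ δ y : ℝ, 0 ≤ δ → (δ + Complex.I * l * y : ℂ) ∈ {z : ℂ | 0 ≤ z.re} := by
    intro δ y h; simpa using h
  have hcont : ContinuousOn (fun p : ℝ × ℝ => G (p.1 + Complex.I * l * p.2))
      (Set.Icc 0 1 ×ˢ Set.Icc (-1) 1) := by
    refine hG.comp (by fun_prop) ?_
    intro p hp
    exact hmem _ _ hp.1.1
  obtain ⟨B, hB⟩ := (isCompact_Icc.prod isCompact_Icc).exists_bound_of_continuousOn hcont
  have hL : Tendsto (fun δ : ℝ => ∫ y in (-1 : ℝ)..1, ((1 - |y| : ℝ) : ℂ) *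
      (Complex.exp (Complex.I * (l * x : ℝ) * y) * G (δ + Complex.I * l * y)))
      (𝓝[>] 0) (𝓝 (∫ y in (-1 : ℝ)..1, ((1 - |y| : ℝ) : ℂ) *
      (Complex.exp (Complex.I * (l * x : ℝ) * y) * G (Complex.I * l * y)))) := by
    refine intervalIntegral.tendsto_integral_filter_of_dominated_convergence (fun _ => B) ?_ ?_ ?_ ?_
    · filter_upwards [hev] with δ hδ
      apply ContinuousOn.aestronglyMeasurable _ measurableSet_uIoc
      refine ContinuousOn.mul (by fun_prop) (ContinuousOn.mul (by fun_prop) ?_)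
      exact hG.comp (by fun_prop) fun y _ => hmem δ y hδ.1.le
    · filter_upwards [hev] with δ hδ
      filter_upwards with y hy
      rw [Set.uIoc_of_le (by norm_num)] at hy
      have hb := hB (δ, y) ⟨⟨hδ.1.le, hδ.2⟩, ⟨hy.1.le, hy.2⟩⟩
      have hy1 : |y| ≤ 1 := abs_le.2 ⟨hy.1.le, hy.2⟩
      rw [norm_mul, norm_mul, Complex.norm_exp, Complex.norm_real,
        Real.norm_of_nonneg (by linarith)]
      simp only [Complex.mul_re, Complex.I_re, Complex.I_im, Complex.ofReal_re, Complex.ofReal_im,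
        Complex.mul_im] 
      simp only [zero_mul, mul_zero, sub_zero, one_mul, Real.exp_zero]
      have := abs_nonneg y
      simp only at hb
      have := norm_nonneg (G (δ + Complex.I * l * y))
      nlinarith
    · exact intervalIntegrable_const
    · filter_upwards with y hy
      refine Tendsto.const_mul _ (Tendsto.const_mul _ ?_)
      have h0 : ContinuousWithinAt (fun δ : ℝ => G (δ + Complex.I * l * y)) (Set.Ioi 0) 0 := by
        refine ContinuousWithinAt.comp (t := {z : ℂ | 0 ≤ z.re}) (hG _ (hmem 0 y le_rfl)) ?_ ?_
        · exact Continuous.continuousWithinAt (by fun_prop)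
        · intro δ hδ
          exact hmem δ y (le_of_lt hδ)
      simpa [ContinuousWithinAt] using h0
  refine tendsto_nhds_unique (hL.congr' ?_) hR
  filter_upwards [hev] with δ hδ
  exact taub_fubini F hFm C hF hF0 G hFG l x δ hδ.1

lemma taub_RL (g : ℝ → ℂ) (l : ℝ) (hl : 0 < l) :
    Tendsto (fun x : ℝ => ∫ y in (-1 : ℝ)..1, ((1 - |y| : ℝ) : ℂ) *
      (Complex.exp (Complex.I * (l * x : ℝ) * y) * g y)) atTop (𝓝 0) := by
  have h := Real.tendsto_integral_exp_smul_cocompact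
    ((Set.Ioc (-1 : ℝ) 1).indicator fun y : ℝ => ((1 - |y| : ℝ) : ℂ) * g y)
  have hw : Tendsto (fun x : ℝ => x * (-l / (2 * Real.pi))) atTop (cocompact ℝ) := by
    refine Tendsto.mono_right (tendsto_id.atTop_mul_const_of_neg ?_) atBot_le_cocompact
    have := Real.pi_pos
    apply div_neg_of_neg_of_pos <;> linarith
  refine (h.comp hw).congr fun x => ?_
  rw [intervalIntegral.integral_of_le (by norm_num), ← integral_indicator measurableSet_Ioc]
  refine integral_congr_ae ?_
  filter_upwards with y
  by_cases hy : y ∈ Set.Ioc (-1 : ℝ) 1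
  · simp only [Set.indicator_of_mem hy, Circle.smul_def, Real.fourierChar_apply, smul_eq_mul]
    have : (2 * Real.pi * -(y * (x * (-l / (2 * Real.pi))))) = l * x * y := by
      have := Real.pi_pos.ne'
      field_simp
    rw [this]
    push_cast
    rw [show (l * x * y * Complex.I : ℂ) = Complex.I * (l * x) * y by ring]
    ring
  · simp [Set.indicator_of_notMem hy]

lemma taub_main (F : ℝ → ℝ) (hFm : Measurable F) (C : ℝ) (hF : ∀ t, |F t| ≤ C)
    (hF0 : ∀ t ≤ 0, F t = 0) (G : ℂ → ℂ) (hG : ContinuousOn G {z | 0 ≤ z.re})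
    (hFG : ∀ z : ℂ, 0 < z.re → ∫ t : ℝ, (F t : ℂ) * Complex.exp (-z * t) = G z)
    (l : ℝ) (hl : 0 < l) :
    Tendsto (fun x => ∫ v, F (x - v / l) * fejK v) atTop (𝓝 0) := by
  have h1 := taub_RL (fun y => G (Complex.I * l * y)) l hl
  simp_rw [taub_fej F hFm C hF hF0 G hG hFG l _ hl] at h1
  have h2 : Tendsto (fun x => ∫ t, F t * fejK (l * (x - t))) atTop (𝓝 0) := by
    have := (Complex.continuous_re.tendsto _).comp h1
    simpa [Function.comp_def] using this
  have h3 := h2.const_mul l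
  rw [mul_zero] at h3
  refine h3.congr fun x => ?_
  have e1 := integral_sub_left_eq_self (fun t => F t * fejK (l * (x - t))) volume x
  have e2 := Measure.integral_comp_div (fun t => F (x - t) * fejK (l * (x - (x - t)))) l
  rw [← e1, abs_of_pos hl, smul_eq_mul] at *
  rw [← e2]
  refine integral_congr_ae ?_
  filter_upwards with v
  congr 2
  field_simp
  ring

lemma taub_helper (H : ℝ → ℝ) (hm : Measurable H) (C c R : ℝ) (hR : 0 < R)
    (hH : ∀ t, |H t| ≤ C) (hc : ∀ v ∈ Set.Ioc (-R) R, c ≤ H v) :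
    (c + C) * (∫ v in (-R)..R, fejK v) - C * ∫ v, fejK v ≤ ∫ v, H v * fejK v := by
  rw [intervalIntegral.integral_of_le (by linarith), ← integral_indicator measurableSet_Ioc,
    ← integral_const_mul, ← integral_const_mul, ← integral_sub]
  · refine integral_mono_ae ?_ ?_ ?_
    · exact ((fejK_int.indicator measurableSet_Ioc).const_mul _).sub (fejK_int.const_mul _)
    · refine (fejK_int.const_mul C).mono' (by have := fejK_meas; fun_prop) ?_
      filter_upwards with v
      rw [norm_mul, Real.norm_of_nonneg (fejK_nonneg v)]
      exact mul_le_mul_of_nonneg_right (hH v) (fejK_nonneg v)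
    · filter_upwards with v
      have hk := fejK_nonneg v
      by_cases hv : v ∈ Set.Ioc (-R) R
      · simp only [Set.indicator_of_mem hv]
        have := hc v hv
        nlinarith
      · simp only [Set.indicator_of_notMem hv]
        have := (abs_le.1 (hH v)).1
        nlinarith
  · exact (fejK_int.indicator measurableSet_Ioc).const_mul _
  · exact fejK_int.const_mul _

lemma taub_final (F : ℝ → ℝ) (hFm : Measurable F) (C : ℝ) (hF : ∀ t, |F t| ≤ C)
    (hF0 : ∀ t ≤ 0, F t = 0) (G : ℂ → ℂ) (hG : ContinuousOn G {z | 0 ≤ z.re})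
    (hFG : ∀ z : ℂ, 0 < z.re → ∫ t : ℝ, (F t : ℂ) * Complex.exp (-z * t) = G z)
    (hmono : ∀ s t, 0 < s → s ≤ t → (F s + 1) * Real.exp s ≤ (F t + 1) * Real.exp t) :
    Tendsto F atTop (𝓝 0) := by
  have hC : 0 ≤ C := (abs_nonneg _).trans (hF 0)
  set I := ∫ v, fejK v with hI
  have hIpos : 0 < I := fejK_integral_pos
  have key : ∀ ε : ℝ, 0 < ε → ε < 1 → ∀ᶠ x in atTop, |F x| ≤ ε := by
    intro ε h0 h1
    set τ := ε * I / (4 * (ε / 2 + C + 1)) with hτ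
    have hτ0 : 0 < τ := by positivity
    have hτ1 : (ε / 2 + C) * τ < ε * I / 4 := by
      have e : (ε / 2 + C + 1) * τ = ε * I / 4 := by
        rw [hτ]; field_simp
      linarith
    have ht := intervalIntegral_tendsto_integral fejK_int tendsto_neg_atTop_atBot tendsto_id
    obtain ⟨R, hR1, hR⟩ := ((ht.eventually (lt_mem_nhds (show I - τ < I by linarith))).and
      (eventually_gt_atTop 0)).exists
    simp only [id] at hR1
    set η := ε / 4 with hη
    have hη0 : 0 < η := by positivity
    set l := 2 * R / η with hl
    have hl0 : 0 < l := by positivity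
    have hRl : R / l = η / 2 := by rw [hl]; field_simp
    have hvl : ∀ v ∈ Set.Ioc (-R) R, -(η / 2) ≤ v / l ∧ v / l ≤ η / 2 := by
      intro v hv
      rw [← hRl, ← neg_div]
      exact ⟨by gcongr; exact hv.1.le, by gcongr; exact hv.2⟩
    have hJ := taub_main F hFm C hF hF0 G hG hFG l hl0
    have hJ' := hJ.eventually (Metric.ball_mem_nhds 0 (show 0 < ε * I / 4 by positivity))
    rw [eventually_atTop] at hJ'
    obtain ⟨A, hA⟩ := hJ'
    have hA' : ∀ x ≥ A, |∫ v, F (x - v / l) * fejK v| < ε * I / 4 := by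
      intro x hx
      have := hA x hx
      rwa [Real.dist_eq, sub_zero] at this
    filter_upwards [eventually_ge_atTop (|A| + 2)] with x0 hx0
    have hAA := le_abs_self A
    have hAn := abs_nonneg A
    have hη1 : η < 1 := by linarith
    rw [abs_le]
    constructor
    · by_contra hlt
      push Not at hlt
      have hx := hA' (x0 - η / 2) (by linarith)
      have hb := taub_helper (fun v => - F (x0 - η / 2 - v / l)) (by fun_prop) C (ε / 2) R hR
        (fun t => by rw [abs_neg]; exact hF _) (fun v hv => by
          obtain ⟨hv1, hv2⟩ := hvl v hv
          set t := x0 - η / 2 - v / l with htt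
          have hm := hmono t x0 (by linarith) (by linarith)
          have hE : Real.exp t = Real.exp x0 * Real.exp (t - x0) := by
            rw [← Real.exp_add]; ring_nf
          have hE2 : 1 - η ≤ Real.exp (t - x0) := by
            linarith [Real.add_one_le_exp (t - x0)]
          have hp := Real.exp_pos x0
          have hm2 : (F t + 1) * Real.exp (t - x0) ≤ F x0 + 1 := by
            rw [hE] at hm
            refine le_of_mul_le_mul_right ?_ hp
            linarith
          by_contra hcc
          push Not at hcc
          have : (1 - ε / 2) * (1 - η) ≤ (F t + 1) * Real.exp (t - x0) := by
            apply mul_le_mul <;> linarith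
          nlinarith)
      simp only [neg_mul] at hb
      rw [integral_neg] at hb
      have := (abs_lt.1 hx).1
      nlinarith
    · by_contra hlt
      push Not at hlt
      have hx := hA' (x0 + η / 2) (by linarith)
      have hb := taub_helper (fun v => F (x0 + η / 2 - v / l)) (by fun_prop) C (ε / 2) R hR
        (fun t => hF _) (fun v hv => by
          obtain ⟨hv1, hv2⟩ := hvl v hv
          set t := x0 + η / 2 - v / l with htt
          have hm := hmono x0 t (by linarith) (by linarith)
          have hE : Real.exp x0 = Real.exp t * Real.exp (x0 - t) := by
            rw [← Real.exp_add]; ring_nf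
          have hE2 : 1 - η ≤ Real.exp (x0 - t) := by
            linarith [Real.add_one_le_exp (x0 - t)]
          have hp := Real.exp_pos t
          have hm2 : (F x0 + 1) * Real.exp (x0 - t) ≤ F t + 1 := by
            rw [hE] at hm
            refine le_of_mul_le_mul_right ?_ hp
            linarith
          have : (1 + ε) * (1 - η) ≤ (F x0 + 1) * Real.exp (x0 - t) := by
            apply mul_le_mul <;> linarith
          nlinarith)
      have := (abs_lt.1 hx).2
      nlinarith
  rw [Metric.tendsto_nhds]
  intro ε hε
  have hm : 0 < min ε 1 := lt_min hε one_pos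
  filter_upwards [key (min ε 1 / 2) (by positivity) (by have := min_le_right ε 1; linarith)] with x hx
  rw [Real.dist_eq, sub_zero]
  have := min_le_left ε 1
  linarith

lemma psi_laplace (s : ℂ) (hs : 1 < s.re) :
    LSeries (fun n => (ArithmeticFunction.vonMangoldt n : ℂ)) s =
      s * ∫ t in Set.Ioi (0 : ℝ), (Chebyshev.psi (Real.exp t) : ℂ) * Complex.exp (-s * t) := by
  have hIcc : ∀ n : ℕ, Finset.Icc 1 n = Finset.Ioc 0 n := by
    intro n; ext k; simp; omega
  rw [LSeries_eq_mul_integral_of_nonneg (fun n => ArithmeticFunction.vonMangoldt n) zero_le_one hs]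
  · congr 1
    have := integral_comp_exp_Ioi (fun t : ℝ => (∑ k ∈ Finset.Icc 1 ⌊t⌋₊,
      (ArithmeticFunction.vonMangoldt k : ℂ)) * (t : ℂ) ^ (-(s + 1))) 0
    rw [Real.exp_zero] at this
    rw [← this]
    refine setIntegral_congr_fun measurableSet_Ioi fun t _ => ?_
    rw [hIcc, Chebyshev.psi, Complex.cpow_def_of_ne_zero (by exact_mod_cast (Real.exp_pos t).ne'),
      ← Complex.ofReal_log (Real.exp_pos t).le, Real.log_exp, Complex.real_smul]
    push_cast
    rw [mul_left_comm, ← Complex.exp_add]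
    congr 2
    ring
  · simp only [Real.rpow_one]
    refine Asymptotics.IsBigO.of_bound (Real.log 4 + 4) ?_
    filter_upwards with n
    have h := Chebyshev.psi_le_const_mul_self (x := (n : ℝ)) (by positivity)
    have h2 := Chebyshev.psi_nonneg (n : ℝ)
    rw [Chebyshev.psi, Nat.floor_natCast] at h h2
    rw [hIcc, Real.norm_of_nonneg h2]
    simpa using h
  · intro n
    exact ArithmeticFunction.vonMangoldt_nonneg

lemma pnt_aux : Tendsto (fun u : ℝ => Chebyshev.psi (Real.exp u) * Real.exp (-u)) atTop (𝓝 1) := by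
  classical
  set F : ℝ → ℝ := (Set.Ioi (0 : ℝ)).indicator
    (fun u => Chebyshev.psi (Real.exp u) * Real.exp (-u) - 1) with hFdef
  have hpm : Measurable Chebyshev.psi := Chebyshev.psi_mono.measurable
  have hFm : Measurable F := Measurable.indicator (by fun_prop) measurableSet_Ioi
  have hψ : ∀ u : ℝ, Chebyshev.psi (Real.exp u) * Real.exp (-u) ≤ Real.log 4 + 4 := by
    intro u
    have h := Chebyshev.psi_le_const_mul_self (Real.exp_pos u).le
    calc _ ≤ (Real.log 4 + 4) * Real.exp u * Real.exp (-u) := by gcongr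
      _ = _ := by rw [mul_assoc, ← Real.exp_add]; simp
  have hl4 : 0 ≤ Real.log 4 := Real.log_nonneg (by norm_num)
  have hF : ∀ t, |F t| ≤ Real.log 4 + 4 := by
    intro t
    by_cases ht : t ∈ Set.Ioi (0 : ℝ)
    · simp only [hFdef, Set.indicator_of_mem ht]
      have h1 := hψ t
      have h2 : 0 ≤ Chebyshev.psi (Real.exp t) * Real.exp (-t) :=
        mul_nonneg (Chebyshev.psi_nonneg _) (Real.exp_pos _).le
      rw [abs_le]
      constructor <;> linarith
    · simp only [hFdef, Set.indicator_of_notMem ht]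
      simp; positivity
  set a : ZMod 1 := 1
  set G : ℂ → ℂ := fun z =>
    (ArithmeticFunction.vonMangoldt.LFunctionResidueClassAux a (1 + z) - 1) / (1 + z) with hGdef
  have hG : ContinuousOn G {z | 0 ≤ z.re} := by
    refine ContinuousOn.div (ContinuousOn.sub ?_ continuousOn_const) (by fun_prop) ?_
    · refine (ArithmeticFunction.vonMangoldt.continuousOn_LFunctionResidueClassAux a).comp
        (by fun_prop) ?_
      intro z hz
      simpa using hz
    · intro z hz h
      have := congrArg Complex.re h
      simp at this hz
      linarith
  have hFG : ∀ z : ℂ, 0 < z.re → ∫ t : ℝ, (F t : ℂ) * Complex.exp (-z * t) = G z := by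
    intro z hz
    have hz0 : z ≠ 0 := by rintro rfl; simp at hz
    have hs1 : 1 < (1 + z).re := by simpa using hz
    have hs0 : 1 + z ≠ 0 := by
      intro h; rw [h] at hs1; simp at hs1; linarith
    have hL := psi_laplace (1 + z) hs1
    have hE := integral_exp_mul_complex_Ioi (a := -z) (by simpa using hz) 0
    have hGz : G z = LSeries (fun n => (ArithmeticFunction.vonMangoldt n : ℂ)) (1 + z) / (1 + z)
        - 1 / z := by
      simp only [hGdef]
      rw [ArithmeticFunction.vonMangoldt.eqOn_LFunctionResidueClassAux
        (isUnit_of_subsingleton a) hs1]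
      have : (fun n => (ArithmeticFunction.vonMangoldt.residueClass a n : ℂ)) =
          fun n => (ArithmeticFunction.vonMangoldt n : ℂ) := by
        funext n
        congr 1
        rw [ArithmeticFunction.vonMangoldt.residueClass, Set.indicator_of_mem]
        exact Subsingleton.elim _ _
      simp only [this, add_sub_cancel_left, Nat.totient_one, Nat.cast_one, inv_one]
      field_simp
      ring
    rw [hGz, hL, mul_div_cancel_left₀ _ hs0]
    have e1 : ∀ t : ℝ, (F t : ℂ) * Complex.exp (-z * t) = (Set.Ioi (0 : ℝ)).indicator (fun t : ℝ =>
        (Chebyshev.psi (Real.exp t) : ℂ) * Complex.exp (-(1 + z) * t) - Complex.exp (-z * t)) t := by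
      intro t
      by_cases ht : t ∈ Set.Ioi (0 : ℝ)
      · simp only [hFdef, Set.indicator_of_mem ht]
        push_cast
        rw [show (-(1 + z) * t : ℂ) = -t + -z * t by ring, Complex.exp_add]
        ring
      · simp [hFdef, Set.indicator_of_notMem ht]
    simp_rw [e1]
    rw [integral_indicator measurableSet_Ioi, integral_sub, hE]
    · simp
    · have h1 := (integrableOn_exp_mul_complex_Ioi (a := -z) (by simpa using hz) 0).norm.const_mul
        (Real.log 4 + 4)
      refine h1.mono' (Measurable.aestronglyMeasurable (by fun_prop)) ?_
      filter_upwards with t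
      rw [norm_mul, Complex.norm_real, Real.norm_of_nonneg (Chebyshev.psi_nonneg _),
        show (-(1 + z) * t : ℂ) = (-t : ℝ) + -z * t by push_cast; ring, Complex.exp_add, norm_mul,
        ← Complex.ofReal_exp, Complex.norm_real, Real.norm_of_nonneg (Real.exp_pos _).le, ← mul_assoc]
      gcongr
      exact hψ t
    · exact integrableOn_exp_mul_complex_Ioi (a := -z) (by simpa using hz) 0
  have hmono : ∀ s t, 0 < s → s ≤ t → (F s + 1) * Real.exp s ≤ (F t + 1) * Real.exp t := by
    intro s t hs hst
    have ht : t ∈ Set.Ioi (0 : ℝ) := lt_of_lt_of_le hs hst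
    simp only [hFdef, Set.indicator_of_mem ht, Set.indicator_of_mem (Set.mem_Ioi.2 hs),
      sub_add_cancel, mul_assoc, ← Real.exp_add, neg_add_cancel, Real.exp_zero, mul_one]
    exact Chebyshev.psi_mono (Real.exp_le_exp.2 hst)
  have := taub_final F hFm _ hF (fun t ht => by simp [hFdef, ht]) G hG hFG hmono
  have h2 := this.add_const 1
  rw [zero_add] at h2
  refine h2.congr' ?_
  filter_upwards [eventually_gt_atTop 0] with t ht
  simp [hFdef, ht]

lemma pnt_psi : Tendsto (fun N : ℕ => Chebyshev.psi N / N) atTop (𝓝 1) := by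
  have h := pnt_aux.comp (Real.tendsto_log_atTop.comp tendsto_natCast_atTop_atTop)
  refine h.congr' ?_
  filter_upwards [eventually_gt_atTop 0] with N hN
  have : (0 : ℝ) < N := by exact_mod_cast hN
  simp [Real.exp_neg, Real.exp_log this, div_eq_mul_inv]

lemma pnt_psi_sub : Tendsto (fun N : ℕ => (Chebyshev.psi N - Chebyshev.theta N) / N) atTop (𝓝 0) := by
  obtain ⟨C, hC⟩ := Chebyshev.psi_sub_theta_le_mul_sqrt
  have h0 : Tendsto (fun N : ℕ => C * (√(N : ℝ))⁻¹) atTop (𝓝 0) := by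
    have := ((tendsto_inv_atTop_zero.comp Real.tendsto_sqrt_atTop).comp
      (tendsto_natCast_atTop_atTop (R := ℝ))).const_mul C
    simpa using this
  refine squeeze_zero' ?_ ?_ h0
  · filter_upwards with N
    have := Chebyshev.theta_le_psi (N : ℝ)
    exact div_nonneg (by linarith) (by positivity)
  · filter_upwards [eventually_gt_atTop 0] with N hN
    have hN' : (0 : ℝ) < N := by exact_mod_cast hN
    rw [div_le_iff₀ hN']
    refine (hC N).trans (le_of_eq ?_)
    have hs : √(N : ℝ) ≠ 0 := (Real.sqrt_pos.2 hN').ne'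
    nth_rewrite 3 [← Real.mul_self_sqrt hN'.le]
    field_simp

lemma pnt_theta : Tendsto (fun N : ℕ => Chebyshev.theta N / N) atTop (𝓝 1) := by
  have := pnt_psi.sub pnt_psi_sub
  rw [sub_zero] at this
  refine this.congr fun N => ?_
  ring

lemma pnt_pi_sub : Tendsto (fun N : ℕ => (Nat.primeCounting N : ℝ) * Real.log N / N -
    Chebyshev.theta N / N) atTop (𝓝 0) := by
  obtain ⟨c, hc⟩ := Chebyshev.primeCounting_sub_theta_div_log_isBigO.bound
  have hc' := tendsto_natCast_atTop_atTop (R := ℝ) |>.eventually hc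
  have h0 : Tendsto (fun N : ℕ => c * (Real.log (N : ℝ))⁻¹) atTop (𝓝 0) := by
    have := ((tendsto_inv_atTop_zero.comp Real.tendsto_log_atTop).comp
      (tendsto_natCast_atTop_atTop (R := ℝ))).const_mul c
    simpa using this
  refine squeeze_zero_norm' ?_ h0
  filter_upwards [hc', eventually_gt_atTop 1] with N hN h1
  have hN' : (0 : ℝ) < N := by exact_mod_cast (by omega : 0 < N)
  have hl : 0 < Real.log N := Real.log_pos (by exact_mod_cast h1)
  rw [Nat.floor_natCast] at hN
  have e : (Nat.primeCounting N : ℝ) * Real.log N / N - Chebyshev.theta N / N =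
    (Nat.primeCounting N - Chebyshev.theta N / Real.log N) * (Real.log N / N) := by
    field_simp
  rw [e, norm_mul, Real.norm_of_nonneg (show 0 ≤ Real.log N / N by positivity)]
  rw [Real.norm_of_nonneg (show 0 ≤ N / Real.log N ^ 2 by positivity)] at hN
  calc _ ≤ c * (N / Real.log N ^ 2) * (Real.log N / N) := by gcongr
    _ = _ := by field_simp

lemma sum_nth_prime {X : Type*} [AddCommMonoid X] (a : ℕ → X) (N : ℕ) :
    ∑ k ∈ range (Nat.primeCounting N), a (Nat.nth Nat.Prime k) =
      ∑ k ∈ Icc 1 N, if k.Prime then a k else 0 := by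
  induction N with
  | zero => simp
  | succ N ih =>
    rw [Finset.sum_Icc_succ_top (by omega), ← ih]
    have hc : Nat.primeCounting N = Nat.count Nat.Prime (N + 1) := rfl
    have hc' : Nat.primeCounting (N + 1) = Nat.count Nat.Prime (N + 1 + 1) := rfl
    rw [hc', Nat.count_succ, ← hc]
    split_ifs with hp
    · rw [Finset.sum_range_succ, hc, Nat.nth_count hp]
    · simp

lemma sum_LambdaPrime (N : ℕ) : ∑ k ∈ Icc 1 N, LambdaPrime k = Chebyshev.theta N := by
  have hIcc : Finset.Icc 1 N = Finset.Ioc 0 N := by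
    ext k; simp; omega
  rw [Chebyshev.theta, Nat.floor_natCast, hIcc, Finset.sum_filter]
  rfl

lemma sum_vonMangoldt (N : ℕ) :
    ∑ k ∈ Icc 1 N, ArithmeticFunction.vonMangoldt k = Chebyshev.psi N := by
  have hIcc : Finset.Icc 1 N = Finset.Ioc 0 N := by
    ext k; simp; omega
  rw [Chebyshev.psi, Nat.floor_natCast, hIcc]

lemma norm_sum_smul_le {𝕜 : Type*} [RCLike 𝕜] {X : Type*} [NormedAddCommGroup X] [NormedSpace 𝕜 X]
    (a : ℕ → X) (C : ℝ) (ha : ∀ k, ‖a k‖ ≤ C) (s : Finset ℕ) (f : ℕ → ℝ) (hf : ∀ k ∈ s, 0 ≤ f k) :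
    ‖∑ k ∈ s, (f k : 𝕜) • a k‖ ≤ C * ∑ k ∈ s, f k := by
  rw [Finset.mul_sum]
  refine norm_sum_le_of_le _ fun k hk => ?_
  rw [norm_smul, RCLike.norm_ofReal, abs_of_nonneg (hf k hk), mul_comm]
  exact mul_le_mul_of_nonneg_right (ha k) (hf k hk)

lemma core_iff {𝕜 : Type*} [RCLike 𝕜] {X : Type*} [NormedAddCommGroup X] [NormedSpace 𝕜 X]
    (a : ℕ → X) (C : ℝ) (ha : ∀ k, ‖a k‖ ≤ C) (y : X) :
    (Tendsto (fun n : ℕ => (n : 𝕜)⁻¹ • ∑ k ∈ range n, a (Nat.nth Nat.Prime k)) atTop (𝓝 y) ↔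
      Tendsto (fun N : ℕ => (N : 𝕜)⁻¹ • ∑ k ∈ Icc 1 N, (LambdaPrime k : 𝕜) • a k) atTop (𝓝 y)) ∧
    (Tendsto (fun N : ℕ => (N : 𝕜)⁻¹ • ∑ k ∈ Icc 1 N, (LambdaPrime k : 𝕜) • a k) atTop (𝓝 y) ↔
      Tendsto (fun N : ℕ => (N : 𝕜)⁻¹ •
        ∑ k ∈ Icc 1 N, ((ArithmeticFunction.vonMangoldt k : ℝ) : 𝕜) • a k) atTop (𝓝 y)) := by
  constructor
  · set A : ℕ → X := fun n => (n : 𝕜)⁻¹ • ∑ k ∈ range n, a (Nat.nth Nat.Prime k) with hA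
    have hAπ : Tendsto A atTop (𝓝 y) ↔ Tendsto (fun N => A (Nat.primeCounting N)) atTop (𝓝 y) := by
      constructor
      · intro h
        exact h.comp Nat.tendsto_primeCounting
      · intro h
        rw [← tendsto_add_atTop_iff_nat 1]
        have hn := (Nat.nth_strictMono Nat.infinite_setOfPred_prime).tendsto_atTop
        refine (h.comp hn).congr fun n => ?_
        have : Nat.primeCounting (Nat.nth Nat.Prime n) = n + 1 :=
          Nat.count_nth_succ_of_infinite Nat.infinite_setOfPred_prime n
        simp only [Function.comp_def, this]
    rw [hAπ]
    set c : ℕ → ℝ := fun N => (Nat.primeCounting N : ℝ) * Real.log N / N with hc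
    have hc1 : Tendsto c atTop (𝓝 1) := by
      have := pnt_pi_sub.add pnt_theta
      simpa [hc] using this
    have hck : Tendsto (fun N => (c N : 𝕜)) atTop (𝓝 1) := by
      have := (RCLike.continuous_ofReal (K := 𝕜)).tendsto 1 |>.comp hc1
      simpa [Function.comp_def] using this
    have hAc : Tendsto (fun N => A (Nat.primeCounting N)) atTop (𝓝 y) ↔
        Tendsto (fun N => (c N : 𝕜) • A (Nat.primeCounting N)) atTop (𝓝 y) := by
      constructor
      · intro h
        simpa using hck.smul h
      · intro h
        have h2 := (hck.inv₀ one_ne_zero).smul h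
        rw [inv_one, one_smul] at h2
        refine h2.congr' ?_
        filter_upwards [hck.eventually_ne one_ne_zero] with N hN
        exact inv_smul_smul₀ hN _
    rw [hAc]
    have hdiff : Tendsto (fun N : ℕ => (c N : 𝕜) • A (Nat.primeCounting N) -
        (N : 𝕜)⁻¹ • ∑ k ∈ Icc 1 N, (LambdaPrime k : 𝕜) • a k) atTop (𝓝 0) := by
      have h0 := pnt_pi_sub.const_mul C
      rw [mul_zero] at h0
      refine squeeze_zero_norm' ?_ h0
      filter_upwards [eventually_ge_atTop 2] with N hN
      have hN0 : (N : 𝕜) ≠ 0 := by exact_mod_cast (by omega : N ≠ 0)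
      have hπ : Nat.primeCounting N ≠ 0 := by
        have h1 : Nat.primeCounting 2 ≤ Nat.primeCounting N := Nat.monotone_primeCounting hN
        have h2 : Nat.primeCounting 2 = 1 := by decide
        omega
      have hπk : (Nat.primeCounting N : 𝕜) ≠ 0 := by exact_mod_cast hπ
      set f : ℕ → ℝ := fun k => (if k.Prime then Real.log N else 0) - LambdaPrime k with hf
      have e1 : (c N : 𝕜) • A (Nat.primeCounting N) -
          (N : 𝕜)⁻¹ • ∑ k ∈ Icc 1 N, (LambdaPrime k : 𝕜) • a k =
          (N : 𝕜)⁻¹ • ∑ k ∈ Icc 1 N, (f k : 𝕜) • a k := by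
        simp only [hA, hc]
        rw [sum_nth_prime, smul_smul]
        have : ((((Nat.primeCounting N : ℝ) * Real.log N / N : ℝ) : 𝕜) *
            (Nat.primeCounting N : 𝕜)⁻¹) = (N : 𝕜)⁻¹ * (Real.log N : 𝕜) := by
          push_cast
          field_simp
        rw [this, ← smul_smul, ← smul_sub, Finset.smul_sum, ← Finset.sum_sub_distrib]
        congr 1
        refine Finset.sum_congr rfl fun k _ => ?_
        simp only [hf]
        split_ifs <;> simp [sub_smul]
      have hsum : ∑ k ∈ Icc 1 N, f k =
          (Nat.primeCounting N : ℝ) * Real.log N - Chebyshev.theta N := by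
        simp only [hf]
        rw [Finset.sum_sub_distrib, sum_LambdaPrime,
          ← sum_nth_prime (fun _ => Real.log N)]
        simp
      rw [e1, norm_smul, norm_inv, RCLike.norm_natCast]
      have := norm_sum_smul_le (𝕜 := 𝕜) a C ha (Icc 1 N) f (fun k hk => by
        simp only [hf, LambdaPrime]
        rw [Finset.mem_Icc] at hk
        split_ifs with hp
        · have : Real.log k ≤ Real.log N := by
            apply Real.log_le_log
            · exact_mod_cast hk.1
            · exact_mod_cast hk.2
          linarith
        · simp)
      rw [hsum] at this
      calc _ ≤ (N : ℝ)⁻¹ * (C * ((Nat.primeCounting N : ℝ) * Real.log N - Chebyshev.theta N)) := by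
            gcongr
        _ = _ := by ring
    constructor
    · intro h
      simpa using h.sub hdiff
    · intro h
      simpa using h.add hdiff
  · have hdiff : Tendsto (fun N : ℕ => (N : 𝕜)⁻¹ •
        ∑ k ∈ Icc 1 N, ((ArithmeticFunction.vonMangoldt k : ℝ) : 𝕜) • a k -
        (N : 𝕜)⁻¹ • ∑ k ∈ Icc 1 N, (LambdaPrime k : 𝕜) • a k) atTop (𝓝 0) := by
      have h0 := pnt_psi_sub.const_mul C
      rw [mul_zero] at h0
      refine squeeze_zero_norm (fun N => ?_) h0
      set f : ℕ → ℝ := fun k => ArithmeticFunction.vonMangoldt k - LambdaPrime k with hf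
      have e1 : (N : 𝕜)⁻¹ •
          ∑ k ∈ Icc 1 N, ((ArithmeticFunction.vonMangoldt k : ℝ) : 𝕜) • a k -
          (N : 𝕜)⁻¹ • ∑ k ∈ Icc 1 N, (LambdaPrime k : 𝕜) • a k =
          (N : 𝕜)⁻¹ • ∑ k ∈ Icc 1 N, (f k : 𝕜) • a k := by
        rw [← smul_sub, ← Finset.sum_sub_distrib]
        congr 1
        refine Finset.sum_congr rfl fun k _ => ?_
        simp [hf, sub_smul]
      rw [e1, norm_smul, norm_inv, RCLike.norm_natCast]
      have := norm_sum_smul_le (𝕜 := 𝕜) a C ha (Icc 1 N) f (fun k hk => by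
        simp only [hf, LambdaPrime]
        split_ifs with hp
        · rw [ArithmeticFunction.vonMangoldt_apply_prime hp, sub_self]
        · simp)
      have hsum : ∑ k ∈ Icc 1 N, f k = Chebyshev.psi N - Chebyshev.theta N := by
        simp only [hf]
        rw [Finset.sum_sub_distrib, sum_LambdaPrime, sum_vonMangoldt]
      rw [hsum] at this
      calc _ ≤ (N : ℝ)⁻¹ * (C * (Chebyshev.psi N - Chebyshev.theta N)) := by gcongr
        _ = _ := by ring
    constructor
    · intro h
      simpa using h.add hdiff
    · intro h
      simpa using h.sub hdiff

end Tauber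

/-- Let `T` be a power-bounded operator on a Banach space `X` and `x ∈ X`.
The following are equivalent (and the limits coincide):
(i) `(1/n) ∑_{k=1}^n T^{p_k} x` converges in norm;
(ii) `(1/N) ∑_{k=1}^N Λ'(k) T^k x` converges in norm;
(iii) `(1/N) ∑_{k=1}^N Λ(k) T^k x` converges in norm.
This is expressed by saying that for each candidate limit `y`, convergence to `y` of any of the
three sequences is equivalent to convergence to `y` of the others. -/
theorem stmt11 {𝕜 : Type*} [RCLike 𝕜] {X : Type*} [NormedAddCommGroup X] [NormedSpace 𝕜 X]
    [CompleteSpace X] (T : X →L[𝕜] X) (hT : ∃ M : ℝ, ∀ n : ℕ, ‖T ^ n‖ ≤ M) (x : X) :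
    ∀ y : X,
      (Tendsto (fun n : ℕ =>
          (n : 𝕜)⁻¹ • ∑ k ∈ range n, (T ^ (Nat.nth Nat.Prime k)) x) atTop (nhds y) ↔
        Tendsto (fun N : ℕ =>
          (N : 𝕜)⁻¹ • ∑ k ∈ Icc 1 N, (LambdaPrime k : 𝕜) • (T ^ k) x) atTop (nhds y)) ∧
      (Tendsto (fun n : ℕ =>
          (n : 𝕜)⁻¹ • ∑ k ∈ range n, (T ^ (Nat.nth Nat.Prime k)) x) atTop (nhds y) ↔
        Tendsto (fun N : ℕ =>
          (N : 𝕜)⁻¹ • ∑ k ∈ Icc 1 N, ((ArithmeticFunction.vonMangoldt k : ℝ) : 𝕜) • (T ^ k) x)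
          atTop (nhds y)) := by
  intro y
  obtain ⟨M, hM⟩ := hT
  have h := core_iff (𝕜 := 𝕜) (fun k => (T ^ k) x) (M * ‖x‖) (fun k =>
    ((T ^ k).le_opNorm x).trans (mul_le_mul_of_nonneg_right (hM k) (norm_nonneg x))) y
  exact ⟨h.1, h.1.trans h.2⟩
end
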